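/- Let D be an (alpha,beta)-PDF-bounded distribution, let C >= 1 be a constant, suppose w_max/w_min <= C and m >= 10^6 (beta/alpha) C n log n / log log n, and run the weighted picking sequence algorithm on utilities drawn independently from D. Then there exists a constant K (depending only on alpha, beta, C) such that for all sufficiently large n, for any pair of distinct agents i,j, the integer T = 100 * ceil((beta/alpha)*(w_i/w_j)*log(m)/log log(m)) satisfies: (a) t_i(m) >= T >= 1; (b) with probability at least 1 - K/m^3, agent i's T-th picked item g^i_T satisfies u_i(g^i_T) >= 1/2; and (c) with probability at least 1 - K/m^3, sum over k in [T] and ell in [tau_k] of (1 - u_i(g^j_{k,ell})/u_i(g^i_k)) is at least 2, where g^i_k is agent i's k-th picked item, g^j_{k,ell} (ell in [tau_k]) are the items agent j picks strictly between agent i's k-th and (k+1)-th picks (for k = 1 excluding agent j's first picked item, and for k = t_i(m) counting agent j's picks after agent i's last pick). -/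

import Mathlib

open Finset MeasureTheory
open scoped ENNReal

open Finset

/-- `pickCount picker i s` is the number of picks made by agent `i` among the first `s` steps. -/
def pickCount {n m : ℕ} (picker : Fin m → Fin n) (i : Fin n) (s : ℕ) : ℕ :=
  (Finset.univ.filter fun s' : Fin m => (s' : ℕ) < s ∧ picker s' = i).card

/-- A run of the weighted picking sequence algorithm (for an arbitrary tie-breaking rule):
at step `s`, agent `picker s` picks item `item s`.  The picking agent must minimize
`t_i / w_i` among all agents, and the picked item must maximize her utility among the
items that have not been picked at earlier steps. -/
structure IsWPSRun {n m : ℕ} (w : Fin n → ℝ) (u : Fin n → Fin m → ℝ)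
    (picker : Fin m → Fin n) (item : Fin m → Fin m) : Prop where
  item_inj : Function.Injective item
  min_ratio : ∀ s : Fin m, ∀ j : Fin n,
    (pickCount picker (picker s) (s : ℕ) : ℝ) / w (picker s)
      ≤ (pickCount picker j (s : ℕ) : ℝ) / w j
  best_item : ∀ s g : Fin m, (∀ s' : Fin m, (s' : ℕ) < (s : ℕ) → item s' ≠ g) →
    u (picker s) g ≤ u (picker s) (item s)

/-- A probability distribution `D` on `[0,1]` is `(α,β)`-PDF-bounded if it has a density
`f` (with respect to Lebesgue measure restricted to `[0,1]`) satisfying `α ≤ f(x) ≤ β`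
for all `x ∈ [0,1]`.  (Such a distribution is in particular non-atomic.) -/
def PDFBounded (α β : ℝ) (D : MeasureTheory.Measure ℝ) : Prop :=
  ∃ f : ℝ → ℝ≥0∞,
    D = (MeasureTheory.volume.restrict (Set.Icc (0:ℝ) 1)).withDensity f ∧
    ∀ x ∈ Set.Icc (0:ℝ) 1, ENNReal.ofReal α ≤ f x ∧ f x ≤ ENNReal.ofReal β

/-- The joint distribution of the `n·m` utilities `u i g`, drawn independently from `D`. -/
noncomputable def utilMeasure (n m : ℕ) (D : MeasureTheory.Measure ℝ) :
    MeasureTheory.Measure (Fin n → Fin m → ℝ) :=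
  MeasureTheory.Measure.pi fun _ : Fin n => MeasureTheory.Measure.pi fun _ : Fin m => D

/-- The utility that agent `i` has for the `k`-th item she picks (`k` is 1-indexed):
the `k`-th pick of agent `i` occurs at the unique step `s` with `picker s = i` and
`pickCount picker i s = k - 1`, so the sum below has exactly one term whenever
`1 ≤ k ≤ t_i(m)`. -/
noncomputable def pickVal {n m : ℕ} (u : Fin n → Fin m → ℝ) (picker : Fin m → Fin n)
    (item : Fin m → Fin m) (i : Fin n) (k : ℕ) : ℝ :=
  ∑ s ∈ Finset.univ.filter
      (fun s : Fin m => picker s = i ∧ pickCount picker i (s : ℕ) = k - 1),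
    u i (item s)

/-- The sum `∑_{k ∈ [T]} ∑_{ℓ ∈ [τ_k]} (1 - u_i(g^j_{k,ℓ})/u_i(g^i_k))`: it ranges over
the picks of agent `j` other than her first pick, where a pick of agent `j` at step `s`
belongs to interval `k = max(1, t_i(s))` (the items agent `j` picks strictly between
agent `i`'s `k`-th and `(k+1)`-th picks, with the items picked before agent `i`'s second
pick in interval `1`, and those after agent `i`'s last pick in interval `t_i(m)`), and
only intervals `k ≤ T` are counted. -/
noncomputable def intervalSum {n m : ℕ} (u : Fin n → Fin m → ℝ) (picker : Fin m → Fin n)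
    (item : Fin m → Fin m) (i j : Fin n) (T : ℕ) : ℝ :=
  ∑ s ∈ Finset.univ.filter
      (fun s : Fin m => picker s = j ∧ 1 ≤ pickCount picker j (s : ℕ) ∧
        pickCount picker i (s : ℕ) ≤ T),
    (1 - u i (item s) / pickVal u picker item i (max 1 (pickCount picker i (s : ℕ))))

/-!
Suppose every agent has a threshold such that more than `R` items exceed her own threshold and lie
below the thresholds of all the others. As long as nobody has made more than `R` picks, nobody
picks below her threshold, by induction over the picks: each agent still has one of these private
items available. Pick counts are proportional to the weights up to one pick, so an `R` of order
`log m / log log m` covers the first `T` picks of agent `i`.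

No common threshold works. At the quantile `20 R / m` the agents claim few items altogether, but a
given agent has too few private ones with a probability that is only `exp (-Ω(R))`, not
`m ^ (-Ω(1))`. At the quantile `16 (log m) / m` she has enough items, but if all agents claimed so
many, hardly any item would be private. So only the agents that fail at the first quantile use the
second one. Two of these larger claims overlap in at most `11` items, and each meets those of fewer
than `R / 11` failing agents, so the larger claims cost every agent at most `R` of her private
items.

Let `L = log m / log log m` and `ε = 1 / (10 L)`. Both thresholds are at least `1 - ε / 2`. Agent
`j` picks from her `O(log m)` items above the lower threshold, of which at most `40 L` have value at
least `1 - ε` for agent `i`. Apart from her first one, each of her other picks contributes at least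
`ε / 2` to the sum, and there are at least `4 / ε` of them.
-/

open ProbabilityTheory Filter

section Hits

variable {γ X : Type*} [Fintype γ]

open Classical in
/-- The set of items whose value lies in `A`, where `x` gives the values of the items. -/
noncomputable def hits (A : Set X) (x : γ → X) : Finset γ := {g | x g ∈ A}

theorem mem_hits {A : Set X} {x : γ → X} {g : γ} : g ∈ hits A x ↔ x g ∈ A := by
  simp [hits]

theorem hits_mono {A B : Set X} (h : A ⊆ B) (x : γ → X) : hits A x ⊆ hits B x :=
  fun _ hg => mem_hits.2 (h (mem_hits.1 hg))

theorem measurable_hits [MeasurableSpace X] {A : Set X} (hA : MeasurableSet A) :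
    Measurable (hits A : (γ → X) → Finset γ) := by
  refine measurable_finset_iff.2 fun g => ?_
  simp_rw [mem_hits]
  exact measurableSet_setOfPred.1 (measurable_pi_apply g hA)

theorem card_hits_inter [DecidableEq γ] (A : Set X) (Y : Finset γ) (x : γ → X) :
    (#(hits A x ∩ Y) : ℝ) = ∑ g ∈ Y, A.indicator 1 (x g) := by
  classical
  rw [Finset.inter_comm, ← Finset.filter_mem_eq_inter, Finset.card_filter]
  simp [mem_hits, Set.indicator_apply]

end Hits

section BinomialTails

theorem integrable_comp_finset {Ω γ : Type*} [MeasurableSpace Ω] [Finite γ] {μ : Measure Ω}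
    [IsFiniteMeasure μ] {Q : Ω → Finset γ} (hQ : Measurable Q) (f : Finset γ → ℝ) :
    Integrable (fun ω => f (Q ω)) μ :=
  Integrable.of_finite.comp_measurable hQ

theorem mgf_pi_sum {ι Ω : Type*} [Fintype ι] [MeasurableSpace Ω] {ν : Measure Ω}
    [IsProbabilityMeasure ν] {f : Ω → ℝ} (hf : Measurable f) (s : Finset ι) (t : ℝ) :
    mgf (fun ω : ι → Ω => ∑ i ∈ s, f (ω i)) (Measure.pi fun _ => ν) t = mgf f ν t ^ #s := by
  have hind : iIndepFun (fun i (ω : ι → Ω) => f (ω i)) (Measure.pi fun _ => ν) :=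
    iIndepFun_pi fun _ => hf.aemeasurable
  have hcoord (i : ι) : mgf (fun ω : ι → Ω => f (ω i)) (Measure.pi fun _ => ν) t = mgf f ν t := by
    calc _ = mgf f ((Measure.pi fun _ => ν).map (Function.eval i)) t :=
          (mgf_map (measurable_pi_apply i).aemeasurable
            (Measurable.aestronglyMeasurable (by fun_prop))).symm
      _ = mgf f ν t := by rw [(measurePreserving_eval (fun _ : ι => ν) i).map_eq]
  rw [← Finset.sum_fn, hind.mgf_sum (fun i => hf.comp (measurable_pi_apply i)),
    Finset.prod_congr rfl fun i _ => hcoord i, Finset.prod_const]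

variable {γ X : Type*} [MeasurableSpace X] {D : Measure X} [IsProbabilityMeasure D]
  {A B : Set X}

theorem mgf_indicator_one_le (hA : MeasurableSet A) (t : ℝ) :
    mgf (A.indicator 1) D t ≤ Real.exp ((Real.exp t - 1) * D.real A) := by
  have hexp : (fun x => Real.exp (t * A.indicator 1 x)) =
      fun x => 1 + (Real.exp t - 1) * A.indicator 1 x := by
    funext x
    by_cases hx : x ∈ A <;> simp [hx]
  have hint : Integrable (A.indicator (1 : X → ℝ)) D := (integrable_const 1).indicator hA
  calc mgf (A.indicator 1) D t = 1 + (Real.exp t - 1) * D.real A := by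
        rw [mgf, hexp, integral_add (integrable_const 1) (hint.const_mul _), integral_const_mul,
          integral_indicator_one hA]
        simp
    _ ≤ _ := by linarith [Real.add_one_le_exp ((Real.exp t - 1) * D.real A)]

variable [Fintype γ]

theorem mgf_card_hits_inter_le [DecidableEq γ] (hA : MeasurableSet A) (Y : Finset γ) (t : ℝ) :
    mgf (fun x : γ → X => (#(hits A x ∩ Y) : ℝ)) (Measure.pi fun _ => D) t ≤
      Real.exp ((Real.exp t - 1) * (#Y * D.real A)) := by
  simp_rw [card_hits_inter]
  calc _ = mgf (A.indicator 1) D t ^ #Y := mgf_pi_sum (measurable_one.indicator hA) Y t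
    _ ≤ Real.exp ((Real.exp t - 1) * D.real A) ^ #Y :=
        pow_le_pow_left₀ mgf_nonneg (mgf_indicator_one_le hA t) _
    _ = _ := by rw [← Real.exp_nat_mul]; ring_nf

theorem measureReal_le_card_hits_inter [DecidableEq γ] (hA : MeasurableSet A) (Y : Finset γ)
    {t : ℝ} (ht : 0 ≤ t) (r : ℝ) :
    (Measure.pi fun _ => D).real {x : γ → X | r ≤ #(hits A x ∩ Y)} ≤
      Real.exp ((Real.exp t - 1) * (#Y * D.real A) - t * r) := by
  refine (measure_ge_le_exp_mul_mgf r ht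
    (integrable_comp_finset (measurable_hits hA) fun s => Real.exp (t * #(s ∩ Y)))).trans ?_
  rw [sub_eq_neg_add, Real.exp_add, neg_mul]
  exact mul_le_mul_of_nonneg_left (mgf_card_hits_inter_le hA Y t) (Real.exp_pos _).le

theorem measureReal_le_sum_card_hits {ι : Type*} [Fintype ι] (hA : MeasurableSet A) {t : ℝ}
    (ht : 0 ≤ t) (r : ℝ) :
    (Measure.pi fun _ => Measure.pi fun _ => D).real
        {u : ι → γ → X | r ≤ ∑ k, (#(hits A (u k)) : ℝ)} ≤
      Real.exp ((Real.exp t - 1) * (Fintype.card ι * (Fintype.card γ * D.real A)) - t * r) := by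
  classical
  have hcard : Measurable fun x : γ → X => (#(hits A x) : ℝ) :=
    Measurable.of_discrete.comp (measurable_hits hA) (g := fun s : Finset γ => (#s : ℝ))
  have hhits : Measurable fun (u : ι → γ → X) k => hits A (u k) :=
    measurable_pi_lambda _ fun k => (measurable_hits hA).comp (measurable_pi_apply k)
  have hint : Integrable (fun u : ι → γ → X => Real.exp (t * ∑ k, (#(hits A (u k)) : ℝ)))
      (Measure.pi fun _ => Measure.pi fun _ => D) :=
    (Integrable.of_finite
      (f := fun Q : ι → Finset γ => Real.exp (t * ∑ k, (#(Q k) : ℝ)))).comp_measurable hhits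
  refine (measure_ge_le_exp_mul_mgf r ht hint).trans ?_
  have hone := mgf_card_hits_inter_le (D := D) hA (Finset.univ : Finset γ) t
  simp_rw [Finset.inter_univ, Finset.card_univ] at hone
  rw [mgf_pi_sum hcard univ t, sub_eq_neg_add, Real.exp_add, neg_mul, Finset.card_univ]
  refine mul_le_mul_of_nonneg_left ?_ (Real.exp_pos _).le
  calc _ ≤ Real.exp ((Real.exp t - 1) * (Fintype.card γ * D.real A)) ^ Fintype.card ι :=
        pow_le_pow_left₀ mgf_nonneg hone _
    _ = _ := by rw [← Real.exp_nat_mul]; ring_nf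

variable [DecidableEq γ]

theorem measureReal_card_hits_sdiff_le (hA : MeasurableSet A) (Y : Finset γ) (r : ℝ) :
    (Measure.pi fun _ => D).real {x : γ → X | #(hits A x \ Y) ≤ r} ≤
      Real.exp (r - (Fintype.card γ - #Y) * D.real A / 2) := by
  have hexp : Real.exp (-1) ≤ 1 / 2 := by
    linarith [Real.exp_neg_one_lt_d9]
  have hcompl : (#Yᶜ : ℝ) = Fintype.card γ - #Y := by
    rw [Finset.card_compl, Nat.cast_sub (Finset.card_le_univ Y)]
  simp_rw [Finset.sdiff_eq_inter_compl]
  refine (measure_le_le_exp_mul_mgf r (by norm_num : (-1 : ℝ) ≤ 0)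
    (integrable_comp_finset (measurable_hits hA) fun s => Real.exp (-1 * #(s ∩ Yᶜ)))).trans ?_
  calc _ ≤ Real.exp r * Real.exp ((Real.exp (-1) - 1) * (#Yᶜ * D.real A)) := by
        rw [neg_neg, one_mul]
        exact mul_le_mul_of_nonneg_left (mgf_card_hits_inter_le hA Yᶜ (-1)) (Real.exp_pos _).le
    _ ≤ _ := by
        rw [← Real.exp_add, Real.exp_le_exp, ← hcompl]
        nlinarith [mul_nonneg (Nat.cast_nonneg (α := ℝ) #Yᶜ) (measureReal_nonneg (μ := D) (s := A))]

theorem measureReal_mem_and_card_hits_sdiff_le (hA : MeasurableSet A) (hB : MeasurableSet B) {g : γ}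
    {Y : Finset γ} (hg : g ∈ Y) (r : ℝ) :
    (Measure.pi fun _ => D).real {x : γ → X | x g ∈ B ∧ #(hits A x \ Y) ≤ r} =
      D.real B * (Measure.pi fun _ => D).real {x : γ → X | #(hits A x \ Y) ≤ r} := by
  classical
  set ν : Measure (γ → X) := Measure.pi fun _ => D
  let f (h : γ) : X → ℝ := (if h = g then B else A).indicator 1
  have hf (h : γ) : Measurable (f h) :=
    measurable_one.indicator (by split_ifs <;> assumption)
  have hind : iIndepFun (fun h (x : γ → X) => f h (x h)) ν :=
    iIndepFun_pi fun h => (hf h).aemeasurable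
  have hsum := hind.indepFun_finsetSum_of_notMem (fun h => (hf h).comp (measurable_pi_apply h))
    (s := Yᶜ) (i := g) (by simpa using hg)
  have hcount (x : γ → X) : (∑ h ∈ Yᶜ, fun x : γ → X => f h (x h)) x = #(hits A x \ Y) := by
    rw [Finset.sdiff_eq_inter_compl, card_hits_inter, Finset.sum_apply]
    refine Finset.sum_congr rfl fun h hh => ?_
    have : h ≠ g := by rintro rfl; simp_all
    simp [f, this]
  have hprod := hsum.symm.measure_inter_preimage_eq_mul {1} (Set.Iic r)
    (measurableSet_singleton 1) measurableSet_Iic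
  have hmemB : (fun x : γ → X => f g (x g)) ⁻¹' {1} = Function.eval g ⁻¹' B := by
    ext x
    simp [f, Set.indicator_apply]
  have hle : (∑ h ∈ Yᶜ, fun x : γ → X => f h (x h)) ⁻¹' Set.Iic r =
      {x | #(hits A x \ Y) ≤ r} := by
    ext x
    simp [hcount]
  rw [hmemB, hle] at hprod
  calc ν.real {x | x g ∈ B ∧ #(hits A x \ Y) ≤ r}
      = ν.real (Function.eval g ⁻¹' B) * ν.real {x | #(hits A x \ Y) ≤ r} := by
        rw [Measure.real, Measure.real, Measure.real, ← ENNReal.toReal_mul, ← hprod]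
        rfl
    _ = _ := by
        rw [(measurePreserving_eval (fun _ => D) g).measureReal_preimage hB.nullMeasurableSet]

theorem measureReal_card_hits_sdiff_le_and_inter_nonempty (hA : MeasurableSet A)
    (hB : MeasurableSet B) (Y Z : Finset γ) (r : ℝ) :
    (Measure.pi fun _ => D).real
        {x : γ → X | #(hits A x \ Y) ≤ r ∧ (hits B x ∩ Z).Nonempty} ≤
      #Z * (D.real B * Real.exp (r - (Fintype.card γ - #Y - 1) * D.real A / 2)) := by
  set ν : Measure (γ → X) := Measure.pi fun _ => D
  have hone (g : γ) : ν.real {x | x g ∈ B ∧ #(hits A x \ insert g Y) ≤ r} ≤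
      D.real B * Real.exp (r - (Fintype.card γ - #Y - 1) * D.real A / 2) := by
    have hcard : (#(insert g Y) : ℝ) ≤ #Y + 1 := mod_cast Finset.card_insert_le g Y
    rw [measureReal_mem_and_card_hits_sdiff_le hA hB (Finset.mem_insert_self g Y)]
    refine mul_le_mul_of_nonneg_left ((measureReal_card_hits_sdiff_le hA _ r).trans ?_)
      measureReal_nonneg
    gcongr Real.exp (r - ?_ * _ / 2)
    linarith
  have hsub : {x : γ → X | #(hits A x \ Y) ≤ r ∧ (hits B x ∩ Z).Nonempty} ⊆
      ⋃ g ∈ Z, {x | x g ∈ B ∧ #(hits A x \ insert g Y) ≤ r} := by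
    rintro x ⟨hcard, g, hg⟩
    rw [Finset.mem_inter, mem_hits] at hg
    have hle : #(hits A x \ insert g Y) ≤ #(hits A x \ Y) :=
      Finset.card_le_card (Finset.sdiff_subset_sdiff le_rfl (Finset.subset_insert g Y))
    exact Set.mem_biUnion hg.2 ⟨hg.1, (Nat.cast_le.2 hle).trans hcard⟩
  calc _ ≤ ∑ g ∈ Z, ν.real {x | x g ∈ B ∧ #(hits A x \ insert g Y) ≤ r} :=
        (measureReal_mono hsub (measure_ne_top _ _)).trans (measureReal_biUnion_finset_le _ _)
    _ ≤ _ := by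
        rw [← nsmul_eq_mul]
        exact Finset.sum_le_card_nsmul _ _ _ fun g _ => hone g

end BinomialTails

section PrivateItems

theorem card_sdiff_le_card_sdiff_add_sum {ι γ : Type*} [DecidableEq γ] {A U V : Finset γ}
    {Q : ι → Finset γ} {s : Finset ι} (h : V ⊆ U ∪ s.biUnion Q) :
    #(A \ U) ≤ #(A \ V) + ∑ l ∈ s, #(A ∩ Q l) := by
  have hsub : A \ U ⊆ A \ V ∪ s.biUnion fun l => A ∩ Q l := by
    intro g hg
    have := @h g
    simp only [Finset.mem_union, Finset.mem_sdiff, Finset.mem_biUnion, Finset.mem_inter] at *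
    grind
  calc #(A \ U) ≤ #(A \ V) + #(s.biUnion fun l => A ∩ Q l) :=
        (Finset.card_le_card hsub).trans (Finset.card_union_le _ _)
    _ ≤ _ := by gcongr; exact Finset.card_biUnion_le

variable {ι γ : Type*} [Fintype ι] [DecidableEq ι] [DecidableEq γ]

/-- The items claimed by some agent outside `S`, where `Q k` is the set of items that agent `k`
claims. -/
def claimedOutside (Q : ι → Finset γ) (S : Finset ι) : Finset γ := Sᶜ.biUnion Q

/-- The items that agent `k` claims and no other agent does, where `Q k` is the set of items that
agent `k` claims. -/
def privateItems (Q : ι → Finset γ) (k : ι) : Finset γ := Q k \ claimedOutside Q {k}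

theorem claimedOutside_congr {Q Q' : ι → Finset γ} {S : Finset ι} (h : ∀ l ∉ S, Q l = Q' l) :
    claimedOutside Q S = claimedOutside Q' S :=
  Finset.biUnion_congr rfl fun l hl => h l (Finset.mem_compl.1 hl)

theorem claimedOutside_subset_biUnion (Q : ι → Finset γ) (S : Finset ι) :
    claimedOutside Q S ⊆ Finset.univ.biUnion Q :=
  Finset.biUnion_subset_biUnion_of_subset_left Q (Finset.subset_univ _)

theorem claimedOutside_singleton_subset (Q : ι → Finset γ) (S : Finset ι) (k : ι) :
    claimedOutside Q {k} ⊆ claimedOutside Q S ∪ (S.erase k).biUnion Q := by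
  intro g
  simp only [claimedOutside, Finset.mem_biUnion, Finset.mem_union, Finset.mem_compl,
    Finset.mem_singleton, Finset.mem_erase]
  grind

theorem claimedOutside_piecewise_subset (Q₁ Q₂ : ι → Finset γ) (C : Finset ι) (k : ι) :
    claimedOutside (C.piecewise Q₂ Q₁) {k} ⊆
      claimedOutside Q₁ {k} ∪ (C.erase k).biUnion Q₂ := by
  intro g
  simp only [claimedOutside, Finset.mem_biUnion, Finset.mem_union, Finset.mem_compl,
    Finset.mem_singleton, Finset.mem_erase, Finset.piecewise]
  grind

/-- Deterministic conditions on small claims `Q₁` and large claims `Q₂` under which every agent can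
be given one of her two claims so that all agents keep more than `R` private items: large claims
overlap in at most `d` items, a large claim has many items outside the small claims of the others,
and among any `p` agents one has either many items in her small claim that nobody else claims, apart
from those `p` agents and a given agent `k`, or a large claim disjoint from that of `k`. -/
structure IsSpread (Q₁ Q₂ : ι → Finset γ) (R p d : ℕ) : Prop where
  card_inter_le : ∀ k l, k ≠ l → #(Q₂ k ∩ Q₂ l) ≤ d
  lt_card_sdiff : ∀ k, 2 * R < #(Q₂ k \ claimedOutside Q₁ {k})
  exists_lt_card_or_disjoint : ∀ (k : ι) (S : Finset ι), k ∉ S → #S = p →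
    ∃ k' ∈ S, 3 * R < #(Q₁ k' \ claimedOutside Q₁ (insert k S)) ∨ Disjoint (Q₂ k') (Q₂ k)

namespace IsSpread

variable {Q₁ Q₂ : ι → Finset γ} {R p d : ℕ}

theorem card_poor_neighbors_lt (h : IsSpread Q₁ Q₂ R p d) (hsub : ∀ k, Q₁ k ⊆ Q₂ k)
    (hpd : p * d ≤ R) {C : Finset ι} (hC : ∀ l ∈ C, #(privateItems Q₁ l) ≤ 2 * R) (k : ι) :
    #{l ∈ C.erase k | ¬Disjoint (Q₂ l) (Q₂ k)} < p := by
  by_contra! hp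
  obtain ⟨S, hS, hcard⟩ := Finset.exists_subset_card_eq hp
  have hkS : k ∉ S := fun hk => by simpa using hS hk
  obtain ⟨k', hk', hlt | hdisj⟩ := h.exists_lt_card_or_disjoint k S hkS hcard
  · have hk'C := hS hk'
    simp only [Finset.mem_filter, Finset.mem_erase] at hk'C
    have hoverlap : ∑ l ∈ (insert k S).erase k', #(Q₁ k' ∩ Q₁ l) ≤ p * d := by
      have hcard' : #((insert k S).erase k') = p := by
        rw [Finset.card_erase_of_mem (Finset.mem_insert_of_mem hk'),
          Finset.card_insert_of_notMem hkS, hcard, Nat.add_sub_cancel]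
      rw [← hcard', ← smul_eq_mul]
      refine Finset.sum_le_card_nsmul _ _ _ fun l hl => ?_
      exact (Finset.card_le_card (Finset.inter_subset_inter (hsub _) (hsub _))).trans
        (h.card_inter_le k' l (Finset.ne_of_mem_erase hl).symm)
    have := card_sdiff_le_card_sdiff_add_sum (A := Q₁ k')
      (claimedOutside_singleton_subset Q₁ (insert k S) k')
    have := hC k' hk'C.1.2
    rw [privateItems] at this
    omega
  · exact (Finset.mem_filter.1 (hS hk')).2 hdisj

theorem sum_card_inter_le (h : IsSpread Q₁ Q₂ R p d) (hsub : ∀ k, Q₁ k ⊆ Q₂ k)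
    (hpd : p * d ≤ R) {C : Finset ι} (hC : ∀ l ∈ C, #(privateItems Q₁ l) ≤ 2 * R) (k : ι) :
    ∑ l ∈ C.erase k, #(Q₂ k ∩ Q₂ l) ≤ R := by
  calc ∑ l ∈ C.erase k, #(Q₂ k ∩ Q₂ l)
      = ∑ l ∈ C.erase k with ¬Disjoint (Q₂ l) (Q₂ k), #(Q₂ k ∩ Q₂ l) := by
        refine (Finset.sum_filter_of_ne fun l _ hl => ?_).symm
        intro hdisj
        rw [Finset.disjoint_iff_inter_eq_empty.1 hdisj.symm, Finset.card_empty] at hl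
        exact hl rfl
    _ ≤ #{l ∈ C.erase k | ¬Disjoint (Q₂ l) (Q₂ k)} * d := by
        rw [← smul_eq_mul]
        refine Finset.sum_le_card_nsmul _ _ _ fun l hl => h.card_inter_le k l ?_
        exact (Finset.ne_of_mem_erase (Finset.mem_of_mem_filter l hl)).symm
    _ ≤ p * d := Nat.mul_le_mul_right d (h.card_poor_neighbors_lt hsub hpd hC k).le
    _ ≤ R := hpd

theorem exists_lt_card_privateItems (h : IsSpread Q₁ Q₂ R p d) (hsub : ∀ k, Q₁ k ⊆ Q₂ k)
    (hpd : p * d ≤ R) :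
    ∃ C : Finset ι, ∀ k, R < #(privateItems (C.piecewise Q₂ Q₁) k) := by
  let C : Finset ι := {k | #(privateItems Q₁ k) ≤ 2 * R}
  refine ⟨C, fun k => ?_⟩
  have hsum := h.sum_card_inter_le hsub hpd (C := C) (fun l hl => (Finset.mem_filter.1 hl).2) k
  have hprivate {A : Finset γ} (hA : A ⊆ Q₂ k) (hlt : 2 * R < #(A \ claimedOutside Q₁ {k})) :
      R < #(A \ claimedOutside (C.piecewise Q₂ Q₁) {k}) := by
    have := card_sdiff_le_card_sdiff_add_sum (A := A) (claimedOutside_piecewise_subset Q₁ Q₂ C k)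
    have : ∑ l ∈ C.erase k, #(A ∩ Q₂ l) ≤ ∑ l ∈ C.erase k, #(Q₂ k ∩ Q₂ l) :=
      Finset.sum_le_sum fun l _ => Finset.card_le_card (Finset.inter_subset_inter hA le_rfl)
    omega
  rw [privateItems]
  by_cases hk : k ∈ C
  · rw [Finset.piecewise_eq_of_mem _ _ _ hk]
    exact hprivate le_rfl (h.lt_card_sdiff k)
  · rw [Finset.piecewise_eq_of_notMem _ _ _ hk]
    refine hprivate (hsub k) (not_le.1 fun hle => hk ?_)
    exact Finset.mem_filter.2 ⟨Finset.mem_univ k, hle⟩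

end IsSpread

end PrivateItems

section RandomSets

variable {ι γ Ω : Type*} [MeasurableSpace Ω]

theorem measurableSet_setOf_finset_maps [Finite ι] [Finite γ] {Q₁ Q₂ : Ω → Finset γ}
    (hQ₁ : Measurable Q₁) (hQ₂ : Measurable Q₂) (p : (ι → Finset γ) → (ι → Finset γ) → Prop) :
    MeasurableSet {u : ι → Ω | p (fun k => Q₁ (u k)) fun k => Q₂ (u k)} := by
  have hpair : Measurable fun u : ι → Ω => (fun k => Q₁ (u k), fun k => Q₂ (u k)) :=
    (measurable_pi_lambda _ fun k => hQ₁.comp (measurable_pi_apply k)).prodMk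
      (measurable_pi_lambda _ fun k => hQ₂.comp (measurable_pi_apply k))
  exact hpair (MeasurableSet.of_discrete (s := {Q | p Q.1 Q.2}))

theorem measureReal_exists_le {κ : Type*} [Fintype κ] {μ : Measure Ω} {p : κ → Ω → Prop} {c : ℝ}
    (hc : ∀ k, μ.real {ω | p k ω} ≤ c) : μ.real {ω | ∃ k, p k ω} ≤ Fintype.card κ * c := by
  rw [Set.ofPred_exists]
  refine (measureReal_iUnion_fintype_le _).trans ?_
  rw [← nsmul_eq_mul]
  exact Finset.sum_le_card_nsmul _ _ _ fun k _ => hc k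

variable [Fintype ι] {ν : Measure Ω} [IsProbabilityMeasure ν]

theorem pi_measureReal_exists_mem_le {E : Set Ω} (hE : MeasurableSet E) {c : ℝ}
    (hc : ν.real E ≤ c) :
    (Measure.pi fun _ => ν).real {u : ι → Ω | ∃ k, u k ∈ E} ≤ Fintype.card ι * c :=
  measureReal_exists_le fun k => by
    rwa [← (measurePreserving_eval (fun _ => ν) k).measureReal_preimage hE.nullMeasurableSet] at hc

/-- Fix the coordinates outside `S`: what remains of the event is contained in a product of sets of
measure at most `c`. -/
theorem pi_measureReal_le_pow [DecidableEq ι] {S : Finset ι} {F : (ι → Ω) → Set Ω} {c : ℝ}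
    (hmeas : MeasurableSet {u : ι → Ω | ∀ k ∈ S, u k ∈ F u}) (hF : DependsOn F (Sᶜ : Finset ι))
    (hc : ∀ u, ν.real (F u) ≤ c) :
    (Measure.pi fun _ => ν).real {u : ι → Ω | ∀ k ∈ S, u k ∈ F u} ≤ c ^ #S := by
  set E := {u : ι → Ω | ∀ k ∈ S, u k ∈ F u}
  have hc' (u : ι → Ω) : ν (F u) ≤ ENNReal.ofReal c :=
    (ENNReal.le_ofReal_iff_toReal_le (measure_ne_top _ _)
      (measureReal_nonneg.trans (hc u))).2 (hc u)
  have hsection (u : ι → Ω) : (∫⋯∫⁻_S, E.indicator 1 ∂fun _ => ν) u ≤ ENNReal.ofReal c ^ #S := by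
    have hsub : Function.updateFinset u S ⁻¹' E ⊆ Set.univ.pi fun _ : S => F u := by
      intro y hy k _
      have := hy k k.2
      rw [hF (x := Function.updateFinset u S y) (y := u) fun i hi => by
        simp_all [Function.updateFinset]] at this
      simpa [Function.updateFinset] using this
    calc _ = Measure.pi (fun _ : S => ν) (Function.updateFinset u S ⁻¹' E) :=
          lintegral_indicator_one (measurable_updateFinset hmeas)
      _ ≤ Measure.pi (fun _ : S => ν) (Set.univ.pi fun _ : S => F u) := measure_mono hsub
      _ = ν (F u) ^ #S := by simp [Measure.pi_pi]
      _ ≤ _ := pow_le_pow_left' (hc' u) _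
  have hE : Measure.pi (fun _ => ν) E ≤ ENNReal.ofReal c ^ #S := by
    rw [← lintegral_indicator_one hmeas]
    refine (lintegral_le_of_lmarginal_le S (measurable_one.indicator hmeas) measurable_const
      fun u => (hsection u).trans ?_).trans (by simp :
        ∫⁻ _, ENNReal.ofReal c ^ #S ∂Measure.pi (fun _ : ι => ν) ≤ _)
    simp [lmarginal]
  have hc0 : 0 ≤ c := measureReal_nonneg.trans (hc fun _ => (ν.nonempty_of_neZero).some)
  rw [← ENNReal.ofReal_pow hc0] at hE
  exact ENNReal.toReal_le_of_le_ofReal (by positivity) hE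

variable [Finite γ] [DecidableEq γ] {Q₁ Q₂ : Ω → Finset γ}

theorem pi_measureReal_le_card_inter_le (hQ₁ : Measurable Q₁) (hQ₂ : Measurable Q₂) {k l : ι}
    (hkl : k ≠ l) {b r c : ℝ} (hc0 : 0 ≤ c)
    (hc : ∀ Z : Finset γ, #Z ≤ b → ν.real {ω | r ≤ #(Q₁ ω ∩ Z)} ≤ c) :
    (Measure.pi fun _ => ν).real
      {u : ι → Ω | #(Q₂ (u l)) ≤ b ∧ r ≤ #(Q₁ (u k) ∩ Q₂ (u l))} ≤ c := by
  classical
  have hmeas := measurableSet_setOf_finset_maps (ι := ι) hQ₁ hQ₂ fun P₁ P₂ =>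
    ∀ k' ∈ ({k} : Finset ι), #(P₂ l) ≤ b ∧ r ≤ #(P₁ k' ∩ P₂ l)
  have := pi_measureReal_le_pow (ν := ν) (S := {k}) (c := c)
    (F := fun u => {ω | #(Q₂ (u l)) ≤ b ∧ r ≤ #(Q₁ ω ∩ Q₂ (u l))}) hmeas
    (fun u v huv => by simp only [huv l (by simpa using hkl.symm)]) fun u => ?_
  · simpa using this
  · by_cases hb : #(Q₂ (u l)) ≤ b
    · simpa [hb] using hc _ hb
    · simpa [hb] using hc0

variable [DecidableEq ι]

theorem pi_measureReal_card_sdiff_claimedOutside_le (hQ₁ : Measurable Q₁) (hQ₂ : Measurable Q₂)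
    (k : ι) {M r c : ℝ} (hc0 : 0 ≤ c)
    (hc : ∀ Y : Finset γ, #Y ≤ M → ν.real {ω | #(Q₂ ω \ Y) ≤ r} ≤ c) :
    (Measure.pi fun _ => ν).real {u : ι → Ω | #(claimedOutside (fun l => Q₁ (u l)) {k}) ≤ M ∧
      #(Q₂ (u k) \ claimedOutside (fun l => Q₁ (u l)) {k}) ≤ r} ≤ c := by
  have hmeas := measurableSet_setOf_finset_maps (ι := ι) hQ₁ hQ₂ fun P₁ P₂ =>
    ∀ k' ∈ ({k} : Finset ι), #(claimedOutside P₁ {k}) ≤ M ∧ #(P₂ k' \ claimedOutside P₁ {k}) ≤ r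
  have := pi_measureReal_le_pow (ν := ν) (S := {k}) (c := c)
    (F := fun u => {ω | #(claimedOutside (fun l => Q₁ (u l)) {k}) ≤ M ∧
      #(Q₂ ω \ claimedOutside (fun l => Q₁ (u l)) {k}) ≤ r}) hmeas
    (fun u v huv => ?_) fun u => ?_
  · simpa using this
  · have := claimedOutside_congr (S := {k}) fun l hl =>
      congrArg Q₁ (huv l (by simpa using hl))
    simp only [this]
  · by_cases hM : #(claimedOutside (fun l => Q₁ (u l)) {k}) ≤ M
    · simpa [hM] using hc _ hM
    · simpa [hM] using hc0

theorem pi_measureReal_forall_mem_poor_neighbor_le (hQ₁ : Measurable Q₁) (hQ₂ : Measurable Q₂)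
    {k : ι} {S : Finset ι} (hk : k ∉ S) {M b r c : ℝ} (hc0 : 0 ≤ c)
    (hc : ∀ Y Z : Finset γ, #Y ≤ M → #Z ≤ b →
      ν.real {ω | #(Q₁ ω \ Y) ≤ r ∧ (Q₂ ω ∩ Z).Nonempty} ≤ c) :
    (Measure.pi fun _ => ν).real {u : ι → Ω | ∀ k' ∈ S,
      #(claimedOutside (fun l => Q₁ (u l)) (insert k S)) ≤ M ∧ #(Q₂ (u k)) ≤ b ∧
      #(Q₁ (u k') \ claimedOutside (fun l => Q₁ (u l)) (insert k S)) ≤ r ∧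
      (Q₂ (u k') ∩ Q₂ (u k)).Nonempty} ≤ c ^ #S := by
  have hmeas := measurableSet_setOf_finset_maps (ι := ι) hQ₁ hQ₂ fun P₁ P₂ =>
    ∀ k' ∈ S, #(claimedOutside P₁ (insert k S)) ≤ M ∧ #(P₂ k) ≤ b ∧
      #(P₁ k' \ claimedOutside P₁ (insert k S)) ≤ r ∧ (P₂ k' ∩ P₂ k).Nonempty
  refine pi_measureReal_le_pow (ν := ν) (S := S) (c := c)
    (F := fun u => {ω | #(claimedOutside (fun l => Q₁ (u l)) (insert k S)) ≤ M ∧ #(Q₂ (u k)) ≤ b ∧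
      #(Q₁ ω \ claimedOutside (fun l => Q₁ (u l)) (insert k S)) ≤ r ∧
      (Q₂ ω ∩ Q₂ (u k)).Nonempty}) hmeas (fun u v huv => ?_) fun u => ?_
  · have := claimedOutside_congr (S := insert k S) fun l hl =>
      congrArg Q₁ (huv l (by simp_all))
    simp only [this, huv k (by simpa using hk)]
  · by_cases hM : #(claimedOutside (fun l => Q₁ (u l)) (insert k S)) ≤ M
    · by_cases hb : #(Q₂ (u k)) ≤ b
      · simpa [hM, hb] using hc _ _ hM hb
      · simpa [hb] using hc0
    · simpa [hM] using hc0

theorem pi_measureReal_exists_poor_neighbors_le (hQ₁ : Measurable Q₁) (hQ₂ : Measurable Q₂)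
    (p : ℕ) {M b r c : ℝ} (hc0 : 0 ≤ c)
    (hc : ∀ Y Z : Finset γ, #Y ≤ M → #Z ≤ b →
      ν.real {ω | #(Q₁ ω \ Y) ≤ r ∧ (Q₂ ω ∩ Z).Nonempty} ≤ c) :
    (Measure.pi fun _ => ν).real {u : ι → Ω | ∃ k, ∃ S : {S : Finset ι // #S = p},
      k ∉ S.1 ∧ ∀ k' ∈ S.1,
      #(claimedOutside (fun l => Q₁ (u l)) (insert k S)) ≤ M ∧ #(Q₂ (u k)) ≤ b ∧
      #(Q₁ (u k') \ claimedOutside (fun l => Q₁ (u l)) (insert k S)) ≤ r ∧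
      (Q₂ (u k') ∩ Q₂ (u k)).Nonempty} ≤ Fintype.card ι * (Fintype.card ι * c) ^ p := by
  refine measureReal_exists_le fun k => ?_
  have hchoose : (Fintype.card {S : Finset ι // #S = p} : ℝ) ≤ Fintype.card ι ^ p := by
    rw [Fintype.card_finset_len]
    exact_mod_cast Nat.choose_le_pow _ _
  calc _ ≤ Fintype.card {S : Finset ι // #S = p} * c ^ p := measureReal_exists_le fun S => ?_
    _ ≤ Fintype.card ι ^ p * c ^ p := by gcongr
    _ = _ := (mul_pow _ _ _).symm
  by_cases hk : k ∈ S.1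
  · simpa [hk] using pow_nonneg hc0 p
  · simpa [hk, S.2] using pi_measureReal_forall_mem_poor_neighbor_le hQ₁ hQ₂ hk hc0 hc

theorem pi_measureReal_not_isSpread_le (hQ₁ : Measurable Q₁) (hQ₂ : Measurable Q₂)
    (R p d : ℕ) {M b c₁ c₂ c₃ c₄ c₅ : ℝ} (hc₃ : 0 ≤ c₃) (hc₄ : 0 ≤ c₄) (hc₅ : 0 ≤ c₅)
    (hunion : (Measure.pi fun _ => ν).real
      {u : ι → Ω | M ≤ #(Finset.univ.biUnion fun k => Q₁ (u k))} ≤ c₁)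
    (hcard : ν.real {ω | b ≤ #(Q₂ ω)} ≤ c₂)
    (hpair : ∀ Z : Finset γ, #Z ≤ b → ν.real {ω | (d + 1 : ℝ) ≤ #(Q₂ ω ∩ Z)} ≤ c₃)
    (hlarge : ∀ Y : Finset γ, #Y ≤ M → ν.real {ω | #(Q₂ ω \ Y) ≤ (2 * R : ℝ)} ≤ c₄)
    (hlocal : ∀ Y Z : Finset γ, #Y ≤ M → #Z ≤ b →
      ν.real {ω | #(Q₁ ω \ Y) ≤ (3 * R : ℝ) ∧ (Q₂ ω ∩ Z).Nonempty} ≤ c₅) :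
    (Measure.pi fun _ => ν).real
        {u : ι → Ω | ¬IsSpread (fun k => Q₁ (u k)) (fun k => Q₂ (u k)) R p d} ≤
      c₁ + Fintype.card ι * c₂ + Fintype.card ι * (Fintype.card ι * c₃) + Fintype.card ι * c₄ +
        Fintype.card ι * (Fintype.card ι * c₅) ^ p := by
  set P : Measure (ι → Ω) := Measure.pi fun _ => ν
  have hE₂ := pi_measureReal_exists_mem_le (ι := ι)
    (hQ₂ (MeasurableSet.of_discrete (s := {s : Finset γ | b ≤ #s}))) hcard
  have hE₃ : P.real {u | ∃ k l, k ≠ l ∧ #(Q₂ (u l)) ≤ b ∧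
      (d + 1 : ℝ) ≤ #(Q₂ (u k) ∩ Q₂ (u l))} ≤ Fintype.card ι * (Fintype.card ι * c₃) := by
    refine measureReal_exists_le fun k => measureReal_exists_le fun l => ?_
    by_cases hkl : k = l
    · simpa [hkl] using hc₃
    · simpa [hkl] using pi_measureReal_le_card_inter_le hQ₂ hQ₂ hkl hc₃ hpair
  have hE₄ := measureReal_exists_le fun k : ι =>
    pi_measureReal_card_sdiff_claimedOutside_le hQ₁ hQ₂ k hc₄ hlarge
  have hE₅ := pi_measureReal_exists_poor_neighbors_le (ι := ι) hQ₁ hQ₂ p hc₅ hlocal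
  refine (measureReal_mono fun u hu => ?_).trans <| (measureReal_union_le _ _).trans <|
    add_le_add ((measureReal_union_le _ _).trans <| add_le_add ((measureReal_union_le _ _).trans <|
      add_le_add ((measureReal_union_le _ _).trans <| add_le_add hunion hE₂) hE₃) hE₄) hE₅
  contrapose! hu
  simp only [Set.mem_union, Set.mem_ofPred_eq, Set.mem_preimage, not_or, not_exists, not_and,
    not_le, not_not] at hu ⊢
  obtain ⟨⟨⟨⟨hM, hb⟩, hinter⟩, hsdiff⟩, hneighbors⟩ := hu
  have hclaimed (S : Finset ι) : (#(claimedOutside (fun l => Q₁ (u l)) S) : ℝ) ≤ M :=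
    (Nat.cast_le.2 (Finset.card_le_card (claimedOutside_subset_biUnion _ S))).trans hM.le
  refine ⟨fun k l hkl => ?_, fun k => ?_, fun k S hk hS => ?_⟩
  · have := hinter k l hkl (hb l).le
    norm_cast at this
    omega
  · exact_mod_cast hsdiff k (hclaimed _)
  · by_contra! h
    obtain ⟨k', hk', hlocal'⟩ := by simpa using hneighbors k ⟨S, hS⟩ hk
    exact (h k' hk').2 (Finset.disjoint_iff_inter_eq_empty.2
      (hlocal' (hclaimed _) (hb k).le (mod_cast (h k' hk').1)))

end RandomSets

section Separated

variable {ι γ : Type*} [Fintype ι] [DecidableEq ι] [Fintype γ] [DecidableEq γ]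

theorem pi_measureReal_not_isSpread_hits_le {X : Type*} [MeasurableSpace X] {D : Measure X}
    [IsProbabilityMeasure D] {A₁ A₂ : Set X} (hA₁ : MeasurableSet A₁) (hA₂ : MeasurableSet A₂)
    (R p d : ℕ) {M b t₁ t₂ t₃ : ℝ} (hb : 0 ≤ b) (ht₁ : 0 ≤ t₁) (ht₂ : 0 ≤ t₂) (ht₃ : 0 ≤ t₃) :
    (Measure.pi fun _ => Measure.pi fun _ => D).real
        {u : ι → γ → X | ¬IsSpread (fun k => hits A₁ (u k)) (fun k => hits A₂ (u k)) R p d} ≤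
      Real.exp ((Real.exp t₁ - 1) * (Fintype.card ι * (Fintype.card γ * D.real A₁)) - t₁ * M) +
      Fintype.card ι * Real.exp ((Real.exp t₂ - 1) * (Fintype.card γ * D.real A₂) - t₂ * b) +
      Fintype.card ι * (Fintype.card ι *
        Real.exp ((Real.exp t₃ - 1) * (b * D.real A₂) - t₃ * (d + 1))) +
      Fintype.card ι * Real.exp (2 * R - (Fintype.card γ - M) * D.real A₂ / 2) +
      Fintype.card ι * (Fintype.card ι * (b * (D.real A₂ *
        Real.exp (3 * R - (Fintype.card γ - M - 1) * D.real A₁ / 2)))) ^ p := by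
  refine pi_measureReal_not_isSpread_le (M := M) (b := b) (measurable_hits hA₁)
    (measurable_hits hA₂) R p d (by positivity) (by positivity) (by positivity) ?_ ?_
    (fun Z hZ => ?_) (fun Y hY => ?_) fun Y Z hY hZ => ?_
  · refine (measureReal_mono fun u (hu : M ≤ _) => ?_).trans
      (measureReal_le_sum_card_hits hA₁ ht₁ M)
    have := Finset.card_biUnion_le (s := Finset.univ) (t := fun k => hits A₁ (u k))
    exact hu.trans (mod_cast this)
  · simpa using measureReal_le_card_hits_inter (D := D) hA₂ (Finset.univ : Finset γ) ht₂ b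
  · refine (measureReal_le_card_hits_inter hA₂ Z ht₃ _).trans ?_
    have := Real.one_le_exp ht₃
    gcongr
  · refine (measureReal_card_hits_sdiff_le hA₂ Y _).trans ?_
    gcongr
  · refine (measureReal_card_hits_sdiff_le_and_inter_nonempty hA₁ hA₂ Y Z _).trans ?_
    gcongr

/-- Agents can be given thresholds, all at least `θ`, such that each agent has more than `R` items
above her own threshold that lie below the thresholds of all the other agents. -/
def Separated (θ : ℝ) (R : ℕ) (u : ι → γ → ℝ) : Prop :=
  ∃ τ : ι → ℝ, (∀ k, θ ≤ τ k) ∧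
    ∀ k, R < #(privateItems (fun l => hits (Set.Ici (τ l)) (u l)) k)

theorem IsSpread.separated {θ₁ θ₂ : ℝ} (hθ : θ₂ ≤ θ₁) {R p d : ℕ} (hpd : p * d ≤ R)
    {u : ι → γ → ℝ} (h : IsSpread (fun k => hits (Set.Ici θ₁) (u k))
      (fun k => hits (Set.Ici θ₂) (u k)) R p d) :
    Separated θ₂ R u := by
  obtain ⟨C, hC⟩ := h.exists_lt_card_privateItems
    (fun k => hits_mono (Set.Ici_subset_Ici.2 hθ) (u k)) hpd
  refine ⟨C.piecewise (fun _ => θ₂) fun _ => θ₁, fun k => ?_, fun k => ?_⟩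
  · by_cases hk : k ∈ C <;> simp [hk, hθ]
  · convert hC k using 4 with l
    by_cases hl : l ∈ C <;> simp [hl]

end Separated

section Run

variable {n m : ℕ} {w : Fin n → ℝ} {u : Fin n → Fin m → ℝ} {picker : Fin m → Fin n}
  {item : Fin m → Fin m} {i j : Fin n} {θ : ℝ} {R T : ℕ}

theorem pickCount_mono (picker : Fin m → Fin n) (i : Fin n) : Monotone (pickCount picker i) :=
  fun _ _ hst => Finset.card_le_card <|
    Finset.monotone_filter_right _ fun _ _ hx => ⟨hx.1.trans_le hst, hx.2⟩

theorem pickCount_zero (picker : Fin m → Fin n) (i : Fin n) : pickCount picker i 0 = 0 := by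
  simp [pickCount]

theorem pickCount_succ (picker : Fin m → Fin n) (i : Fin n) (s : Fin m) :
    pickCount picker i (s + 1) = pickCount picker i s + if picker s = i then 1 else 0 := by
  unfold pickCount
  split_ifs with h
  · rw [← Finset.card_insert_of_notMem (a := s) (by simp)]
    congr 1
    grind
  · rw [add_zero]
    congr 1
    grind

theorem sum_pickCount (picker : Fin m → Fin n) : ∑ i, pickCount picker i m = m := by
  simpa [pickCount] using (Finset.card_eq_sum_card_fiberwise (s := Finset.univ)
    (t := Finset.univ) (f := picker) (by simp)).symm

theorem exists_picker_eq_and_pickCount_eq {c s : ℕ} (hs : s ≤ m)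
    (hc : c < pickCount picker i s) :
    ∃ t : Fin m, (t : ℕ) < s ∧ picker t = i ∧ pickCount picker i t = c := by
  induction s with
  | zero => simp [pickCount_zero] at hc
  | succ s ih =>
    have hsucc := pickCount_succ picker i ⟨s, hs⟩
    by_cases h : c < pickCount picker i s
    · obtain ⟨t, hts, ht⟩ := ih (Nat.le_of_succ_le hs) h
      exact ⟨t, hts.trans s.lt_succ_self, ht⟩
    · refine ⟨⟨s, hs⟩, s.lt_succ_self, ?_⟩
      grind

theorem eq_of_pickCount_eq {s t : Fin m} (hs : picker s = i) (ht : picker t = i)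
    (h : pickCount picker i s = pickCount picker i t) : s = t := by
  have lt_of_lt {a b : Fin m} (ha : picker a = i) (hab : a < b) :
      pickCount picker i a < pickCount picker i b := by
    have := pickCount_mono picker i (show (a : ℕ) + 1 ≤ b from hab)
    rw [pickCount_succ, if_pos ha] at this
    omega
  rcases lt_trichotomy s t with hst | hst | hst
  · exact absurd h (lt_of_lt hs hst).ne
  · exact hst
  · exact absurd h (lt_of_lt ht hst).ne'

theorem pickVal_pickCount_add_one {t : Fin m} (ht : picker t = i) :
    pickVal u picker item i (pickCount picker i t + 1) = u i (item t) := by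
  unfold pickVal
  rw [Finset.sum_eq_single_of_mem t (by simp [ht])]
  intro s hs hst
  simp only [Finset.mem_filter, Finset.mem_univ, true_and, Nat.add_sub_cancel] at hs
  exact absurd (eq_of_pickCount_eq hs.1 ht hs.2) hst

theorem IsWPSRun.pickCount_sub_one_div_le (h : IsWPSRun w u picker item) (hw : ∀ i, 0 < w i)
    (k l : Fin n) {s : ℕ} (hs : s ≤ m) :
    (pickCount picker k s - 1 : ℝ) / w k ≤ pickCount picker l s / w l := by
  have := hw k
  have := hw l
  rcases Nat.eq_zero_or_pos (pickCount picker k s) with h0 | hpos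
  · rw [h0]
    exact (div_nonpos_of_nonpos_of_nonneg (by norm_num) (hw k).le).trans (by positivity)
  · obtain ⟨t, hts, htk, htc⟩ := exists_picker_eq_and_pickCount_eq hs (Nat.sub_lt hpos one_pos)
    calc (pickCount picker k s - 1 : ℝ) / w k = pickCount picker k t / w k := by
          rw [htc, Nat.cast_pred hpos]
      _ ≤ pickCount picker l t / w l := by simpa only [htk] using h.min_ratio t l
      _ ≤ pickCount picker l s / w l := by gcongr; exact pickCount_mono picker l hts.le

theorem IsWPSRun.pickCount_le (h : IsWPSRun w u picker item) (hw : ∀ i, 0 < w i)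
    (hTR : ∀ k, 1 + T * (w k / w i) ≤ (R : ℝ)) {s : ℕ} (hs : s ≤ m)
    (hT : pickCount picker i s ≤ T) (k : Fin n) : pickCount picker k s ≤ R := by
  have hk := hw k
  have hi := hw i
  have hbal := h.pickCount_sub_one_div_le hw k i hs
  rw [div_le_iff₀ hk] at hbal
  have hle : (pickCount picker i s : ℝ) / w i * w k ≤ T * (w k / w i) := by
    rw [div_mul_eq_mul_div, mul_div_assoc]
    gcongr
  have : (pickCount picker k s : ℝ) ≤ R := by linarith [hTR k]
  exact_mod_cast this

theorem IsWPSRun.le_pickCount (h : IsWPSRun w u picker item) (hw : ∀ i, 0 < w i)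
    (hTR : ∀ k, 1 + T * (w k / w i) ≤ (R : ℝ)) (hR : n * R < m) :
    T ≤ pickCount picker i m := by
  by_contra! hlt
  have := Finset.sum_le_card_nsmul Finset.univ _ _ fun k _ =>
    h.pickCount_le hw hTR le_rfl hlt.le k
  rw [sum_pickCount, Finset.card_fin, smul_eq_mul] at this
  exact hR.not_ge this

/-- By induction on `s`: the earlier picks of the other agents lie above their own thresholds,
so they miss the private items of the picking agent, who has not exhausted these herself. -/
theorem IsWPSRun.threshold_le (h : IsWPSRun w u picker item) (τ : Fin n → ℝ) {s₁ : ℕ}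
    (hR : ∀ k, pickCount picker k s₁ ≤ R)
    (hτ : ∀ k, R < #(privateItems (fun l => hits (Set.Ici (τ l)) (u l)) k))
    (s : Fin m) (hs : (s : ℕ) < s₁) : τ (picker s) ≤ u (picker s) (item s) := by
  induction s using Fin.strong_induction_on with
  | h s ih =>
    obtain ⟨g, hg, hfree⟩ : ∃ g ∈ privateItems (fun l => hits (Set.Ici (τ l)) (u l)) (picker s),
        ∀ s' : Fin m, (s' : ℕ) < s → item s' ≠ g := by
      by_contra! htaken
      refine (hτ (picker s)).not_ge (le_trans ?_ (hR (picker s)))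
      refine (Finset.card_le_card fun g hg => ?_).trans (Finset.card_image_le (f := item))
      obtain ⟨s', hs', rfl⟩ := htaken g hg
      refine Finset.mem_image.2 ⟨s', Finset.mem_filter.2
        ⟨Finset.mem_univ _, hs'.trans hs, ?_⟩, rfl⟩
      by_contra hne
      refine (Finset.mem_sdiff.1 hg).2 (Finset.mem_biUnion.2 ⟨picker s', by simpa using hne, ?_⟩)
      exact mem_hits.2 (ih s' hs' (hs'.trans hs))
    exact (mem_hits.1 (Finset.mem_sdiff.1 hg).1).trans (h.best_item s g hfree)

theorem IsWPSRun.le_of_separated (h : IsWPSRun w u picker item) (hu : Separated θ R u) {s₁ : ℕ}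
    (hR : ∀ k, pickCount picker k s₁ ≤ R) (s : Fin m) (hs : (s : ℕ) < s₁) :
    θ ≤ u (picker s) (item s) := by
  obtain ⟨τ, hθ, hτ⟩ := hu
  exact (hθ _).trans (h.threshold_le τ hR hτ s hs)

theorem IsWPSRun.le_pickVal (h : IsWPSRun w u picker item) (hw : ∀ i, 0 < w i)
    (hTR : ∀ k, 1 + T * (w k / w i) ≤ (R : ℝ)) (hR : n * R < m) (hu : Separated θ R u)
    {k : ℕ} (hk : 1 ≤ k) (hkT : k ≤ T) : θ ≤ pickVal u picker item i k := by
  obtain ⟨t, -, rfl, htk⟩ := exists_picker_eq_and_pickCount_eq le_rfl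
    ((Nat.sub_lt hk one_pos).trans_le (hkT.trans (h.le_pickCount hw hTR hR)))
  have hsucc := pickCount_succ picker (picker t) t
  rw [if_pos rfl] at hsucc
  have hle := h.le_of_separated hu (h.pickCount_le hw hTR (s := t + 1) t.2 (by omega)) t
    (Nat.lt_add_one _)
  rwa [← pickVal_pickCount_add_one (u := u) (item := item) rfl, htk, Nat.sub_add_cancel hk] at hle

theorem IsWPSRun.le_pickVal_pickCount (h : IsWPSRun w u picker item) {s : Fin m}
    (hpos : 0 < pickCount picker i s) :
    u i (item s) ≤ pickVal u picker item i (pickCount picker i s) := by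
  obtain ⟨t, hts, rfl, htc⟩ := exists_picker_eq_and_pickCount_eq s.2.le
    (Nat.sub_lt hpos one_pos)
  have hval := pickVal_pickCount_add_one (u := u) (item := item) (rfl : picker t = picker t)
  rw [htc, Nat.sub_add_cancel (Nat.one_le_of_lt hpos)] at hval
  rw [hval]
  exact h.best_item t (item s) fun s' hs' heq => by have := h.item_inj heq; omega

theorem IsWPSRun.pickCount_pos (h : IsWPSRun w u picker item) (hw : ∀ i, 0 < w i) (i : Fin n)
    {s : Fin m} (hs : 0 < pickCount picker (picker s) s) : 0 < pickCount picker i s := by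
  have hi := hw i
  have hpos : (0 : ℝ) < pickCount picker (picker s) s / w (picker s) :=
    div_pos (mod_cast hs) (hw _)
  have := hpos.trans_le (h.min_ratio s i)
  exact_mod_cast (div_pos_iff_of_pos_right hi).1 this

theorem IsWPSRun.pickCount_le_card_filter_add (h : IsWPSRun w u picker item) {s₁ : ℕ}
    (hθ : ∀ s : Fin m, (s : ℕ) < s₁ → θ ≤ u (picker s) (item s)) (i j : Fin n) (a : ℝ) :
    pickCount picker j s₁ ≤
      #{s : Fin m | (s : ℕ) < s₁ ∧ picker s = j ∧ 1 ≤ pickCount picker j s ∧ u i (item s) < a} +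
        1 + #(hits (Set.Ici a) (u i) ∩ hits (Set.Ici θ) (u j)) := by
  set first : Finset (Fin m) := {s | picker s = j ∧ pickCount picker j s = 0}
  set high : Finset (Fin m) := {s | (s : ℕ) < s₁ ∧ picker s = j ∧ a ≤ u i (item s)}
  have hfirst : #first ≤ 1 := Finset.card_le_one.2 fun s hs t ht => by
    simp only [first, Finset.mem_filter, Finset.mem_univ, true_and] at hs ht
    exact eq_of_pickCount_eq hs.1 ht.1 (hs.2.trans ht.2.symm)
  have hhigh : #high ≤ #(hits (Set.Ici a) (u i) ∩ hits (Set.Ici θ) (u j)) := by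
    rw [← Finset.card_image_of_injective high h.item_inj]
    refine Finset.card_le_card (Finset.image_subset_iff.2 fun s hs => ?_)
    obtain ⟨hlt, rfl, hsa⟩ := (Finset.mem_filter.1 hs).2
    exact Finset.mem_inter.2 ⟨mem_hits.2 hsa, mem_hits.2 (hθ s hlt)⟩
  refine le_trans (Finset.card_le_card (t := (_ ∪ first) ∪ high) fun s hs => ?_)
    ((Finset.card_union_le _ _).trans (add_le_add ((Finset.card_union_le _ _).trans
      (Nat.add_le_add_left hfirst _)) hhigh))
  grind

theorem IsWPSRun.mul_card_le_intervalSum (h : IsWPSRun w u picker item) (hw : ∀ i, 0 < w i)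
    (hTR : ∀ k, 1 + T * (w k / w i) ≤ (R : ℝ)) (hR : n * R < m) (hu : Separated θ R u)
    {ε : ℝ} (hε : 0 ≤ ε) (hε1 : ε ≤ 1) (hεθ : 1 - ε / 2 ≤ θ) {s₁ : ℕ}
    (hs₁ : pickCount picker i s₁ ≤ T) :
    ε / 2 * #{s : Fin m | (s : ℕ) < s₁ ∧ picker s = j ∧ 1 ≤ pickCount picker j s ∧
      u i (item s) < 1 - ε} ≤ intervalSum u picker item i j T := by
  have hval {s : Fin m} (hs : 0 < pickCount picker i s) (hsT : pickCount picker i s ≤ T) :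
      0 < pickVal u picker item i (pickCount picker i s) ∧
        1 - ε / 2 ≤ pickVal u picker item i (pickCount picker i s) := by
    have := hεθ.trans (h.le_pickVal hw hTR hR hu hs hsT)
    exact ⟨by linarith, this⟩
  unfold intervalSum
  rw [mul_comm, ← nsmul_eq_mul]
  refine (Finset.card_nsmul_le_sum _ _ _ fun s hs => ?_).trans
    (Finset.sum_le_sum_of_subset_of_nonneg (fun s hs => ?_) fun s hs _ => ?_)
  · simp only [Finset.mem_filter, Finset.mem_univ, true_and] at hs
    obtain ⟨hs, rfl, hsj, hlow⟩ := hs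
    have hsi := h.pickCount_pos hw i hsj
    obtain ⟨hpos, hge⟩ := hval hsi ((pickCount_mono picker i hs.le).trans hs₁)
    rw [max_eq_right hsi, le_sub_comm, div_le_iff₀ hpos]
    nlinarith
  · simp only [Finset.mem_filter, Finset.mem_univ, true_and] at hs ⊢
    exact ⟨hs.2.1, hs.2.2.1, (pickCount_mono picker i hs.1.le).trans hs₁⟩
  · simp only [Finset.mem_filter, Finset.mem_univ, true_and] at hs
    obtain ⟨rfl, hsj, hsT⟩ := hs
    have hsi := h.pickCount_pos hw i hsj
    rw [max_eq_right hsi, sub_nonneg]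
    exact div_le_one_of_le₀ (h.le_pickVal_pickCount hsi) (hval hsi hsT).1.le

theorem IsWPSRun.two_le_intervalSum (h : IsWPSRun w u picker item) (hw : ∀ i, 0 < w i)
    (hTR : ∀ k, 1 + T * (w k / w i) ≤ (R : ℝ)) (hR : n * R < m) (hu : Separated θ R u)
    {ε r : ℝ} (hε : 0 < ε) (hε1 : ε ≤ 1) (hεθ : 1 - ε / 2 ≤ θ)
    (hr : #(hits (Set.Ici (1 - ε)) (u i) ∩ hits (Set.Ici θ) (u j)) ≤ r)
    (hcount : r + 4 / ε + 1 ≤ (T - 1) * (w j / w i)) :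
    2 ≤ intervalSum u picker item i j T := by
  have hT := h.le_pickCount hw hTR hR
  obtain ⟨s₁, hs₁, hs₁T⟩ : ∃ s₁ ≤ m, pickCount picker i s₁ = T := by
    rcases hT.eq_or_lt with hT | hT
    · exact ⟨m, le_rfl, hT.symm⟩
    · obtain ⟨t, ht, -, htT⟩ := exists_picker_eq_and_pickCount_eq le_rfl hT
      exact ⟨t, ht.le, htT⟩
  set low := #{s : Fin m | (s : ℕ) < s₁ ∧ picker s = j ∧ 1 ≤ pickCount picker j s ∧
    u i (item s) < 1 - ε}
  have hj : (T - 1) * (w j / w i) ≤ (pickCount picker j s₁ : ℝ) := by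
    have := h.pickCount_sub_one_div_le hw i j hs₁
    rwa [hs₁T, le_div_iff₀ (hw j), div_mul_eq_mul_div, mul_div_assoc] at this
  have hcard : (pickCount picker j s₁ : ℝ) ≤
      low + 1 + #(hits (Set.Ici (1 - ε)) (u i) ∩ hits (Set.Ici θ) (u j)) :=
    mod_cast h.pickCount_le_card_filter_add
      (h.le_of_separated hu (h.pickCount_le hw hTR hs₁ hs₁T.le)) i j (1 - ε)
  have hlow : 4 / ε ≤ low := by linarith
  calc (2 : ℝ) = ε / 2 * (4 / ε) := by field_simp; norm_num
    _ ≤ ε / 2 * low := by gcongr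
    _ ≤ intervalSum u picker item i j T :=
      h.mul_card_le_intervalSum hw hTR hR hu hε.le hε1 hεθ hs₁T.le

end Run

section Quantile

variable {α β : ℝ} {D : Measure ℝ}

theorem continuous_cdf [IsProbabilityMeasure D] [NullSingletonClass D] : Continuous (cdf D) := by
  refine continuous_iff_continuousAt.2 fun a => ?_
  rw [show ⇑(cdf D) = fun x => D.real (Set.Iic x) from funext (cdf_eq_real D)]
  refine (ENNReal.tendsto_toReal (measure_ne_top D _)).comp
    (tendsto_measure_of_ae_tendsto_indicator_of_isFiniteMeasure (μ := D)
      (A := Set.Iic a) (As := Set.Iic) (nhds a) measurableSet_Iic (fun _ => measurableSet_Iic) ?_)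
  filter_upwards [compl_mem_ae_iff.2 (measure_singleton (μ := D) a)] with x hx
  rcases lt_or_gt_of_ne (show x ≠ a from hx) with hxa | hxa
  · filter_upwards [lt_mem_nhds hxa] with b hb
    exact iff_of_true hb.le hxa.le
  · filter_upwards [gt_mem_nhds hxa] with b hb
    exact iff_of_false hb.not_ge hxa.not_ge

theorem exists_measureReal_Ici_eq [IsProbabilityMeasure D] [NullSingletonClass D] {q : ℝ}
    (hq : 0 < q) (hq1 : q < 1) : ∃ θ, D.real (Set.Ici θ) = q := by
  obtain ⟨θ, hθ⟩ : 1 - q ∈ Set.range (cdf D) :=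
    mem_range_of_exists_le_of_exists_ge continuous_cdf
      ((tendsto_cdf_atBot D).eventually_le_const (by linarith)).exists
      ((tendsto_cdf_atTop D).eventually_const_le (by linarith)).exists
  refine ⟨θ, ?_⟩
  rw [← measureReal_congr Ioi_ae_eq_Ici, ← Set.compl_Iic, probReal_compl_eq_one_sub
    measurableSet_Iic, ← cdf_eq_real, hθ, sub_sub_cancel]

theorem PDFBounded.nullSingletonClass (h : PDFBounded α β D) : NullSingletonClass D := by
  obtain ⟨f, rfl, -⟩ := h
  exact ⟨fun x => withDensity_absolutelyContinuous _ _ (measure_singleton x)⟩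

theorem PDFBounded.le (h : PDFBounded α β D) (hβ : 0 ≤ β) : α ≤ β := by
  obtain ⟨f, -, hf⟩ := h
  have := hf 0 (by simp)
  exact (ENNReal.ofReal_le_ofReal_iff hβ).1 (this.1.trans this.2)

theorem PDFBounded.measureReal_Ici_le (h : PDFBounded α β D) (hβ : 0 ≤ β) {a : ℝ} (ha : a ≤ 1) :
    D.real (Set.Ici a) ≤ β * (1 - a) := by
  refine ENNReal.toReal_le_of_le_ofReal (mul_nonneg hβ (sub_nonneg.2 ha)) ?_
  obtain ⟨f, rfl, hf⟩ := h
  rw [withDensity_apply _ measurableSet_Ici, Measure.restrict_restrict measurableSet_Ici]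
  calc ∫⁻ x in Set.Ici a ∩ Set.Icc 0 1, f x
      ≤ ∫⁻ _ in Set.Ici a ∩ Set.Icc 0 1, ENNReal.ofReal β :=
        setLIntegral_mono' (measurableSet_Ici.inter measurableSet_Icc) fun x hx => (hf x hx.2).2
    _ ≤ ENNReal.ofReal β * volume (Set.Icc a 1) := by
        rw [setLIntegral_const]
        gcongr
        exact fun x hx => ⟨hx.1, hx.2.2⟩
    _ = ENNReal.ofReal (β * (1 - a)) := by rw [ENNReal.ofReal_mul hβ, Real.volume_Icc]

theorem PDFBounded.le_measureReal_Ici [IsFiniteMeasure D] (h : PDFBounded α β D) (hα : 0 ≤ α)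
    {a : ℝ} (ha : 0 ≤ a) : α * (1 - a) ≤ D.real (Set.Ici a) := by
  refine (ENNReal.ofReal_le_iff_le_toReal (measure_ne_top _ _)).1 ?_
  obtain ⟨f, rfl, hf⟩ := h
  rw [withDensity_apply _ measurableSet_Ici, Measure.restrict_restrict measurableSet_Ici]
  calc ENNReal.ofReal (α * (1 - a)) = ENNReal.ofReal α * volume (Set.Icc a 1) := by
        rw [ENNReal.ofReal_mul hα, Real.volume_Icc]
    _ ≤ ∫⁻ _ in Set.Ici a ∩ Set.Icc 0 1, ENNReal.ofReal α := by
        rw [setLIntegral_const]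
        gcongr
        exact fun x hx => ⟨hx.1, ha.trans hx.1, hx.2⟩
    _ ≤ ∫⁻ x in Set.Ici a ∩ Set.Icc 0 1, f x :=
        setLIntegral_mono' (measurableSet_Ici.inter measurableSet_Icc) fun x hx => (hf x hx.2).1

theorem PDFBounded.exists_thresholds [IsProbabilityMeasure D] (h : PDFBounded α β D) (hα : 0 ≤ α)
    {q₁ q₂ ε : ℝ} (hq₁ : 0 < q₁) (hq : q₁ < q₂) (hq₂ : q₂ < 1) (hε : ε ≤ 1) (hqε : q₂ < α * ε) :
    ∃ θ₁ θ₂, D.real (Set.Ici θ₁) = q₁ ∧ D.real (Set.Ici θ₂) = q₂ ∧ θ₂ ≤ θ₁ ∧ 1 - ε ≤ θ₂ := by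
  have := h.nullSingletonClass
  obtain ⟨θ₁, hθ₁⟩ := exists_measureReal_Ici_eq (D := D) hq₁ (hq.trans hq₂)
  obtain ⟨θ₂, hθ₂⟩ := exists_measureReal_Ici_eq (D := D) (hq₁.trans hq) hq₂
  refine ⟨θ₁, θ₂, hθ₁, hθ₂, ?_, ?_⟩ <;> by_contra! hlt
  · have := measureReal_mono (μ := D) (Set.Ici_subset_Ici.2 hlt.le)
    linarith
  · have hmono := measureReal_mono (μ := D) (Set.Ici_subset_Ici.2 hlt.le)
    have hlower := h.le_measureReal_Ici hα (a := 1 - ε) (by linarith)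
    rw [sub_sub_cancel] at hlower
    linarith

end Quantile

section Asymptotics

/-- The ratio `log x / log log x`, the unit in which the numbers of picks are measured. -/
noncomputable def logRatio (x : ℝ) : ℝ := Real.log x / Real.log (Real.log x)

theorem eventually_mul_log_pow_le (A : ℝ) (k : ℕ) :
    ∀ᶠ x : ℝ in atTop, A * Real.log x ^ k ≤ x := by
  filter_upwards [(Real.isLittleO_pow_log_id_atTop (n := k)).def (c := (|A| + 1)⁻¹) (by positivity),
    eventually_ge_atTop 1] with x hx hx1
  rw [Real.norm_of_nonneg (pow_nonneg (Real.log_nonneg hx1) k), id,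
    Real.norm_of_nonneg (by linarith), inv_mul_eq_div, le_div_iff₀ (by positivity)] at hx
  have := pow_nonneg (Real.log_nonneg hx1) k
  nlinarith [le_abs_self A]

theorem tendsto_loglog_atTop : Tendsto (fun x => Real.log (Real.log x)) atTop atTop :=
  Real.tendsto_log_atTop.comp Real.tendsto_log_atTop

theorem tendsto_logRatio_atTop : Tendsto logRatio atTop atTop := by
  refine tendsto_atTop.2 fun A => ?_
  filter_upwards [Real.tendsto_log_atTop.eventually (eventually_mul_log_pow_le A 1),
    tendsto_loglog_atTop.eventually_gt_atTop 0] with x hx hpos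
  rwa [pow_one, ← le_div_iff₀ hpos] at hx

theorem eventually_mul_logRatio_le_log (A : ℝ) :
    ∀ᶠ x : ℝ in atTop, A * logRatio x ≤ Real.log x := by
  filter_upwards [tendsto_loglog_atTop.eventually_ge_atTop A,
    Real.tendsto_log_atTop.eventually_gt_atTop 0, tendsto_loglog_atTop.eventually_gt_atTop 0]
    with x hA hx hxx
  rw [logRatio, mul_div_assoc', div_le_iff₀ hxx, mul_comm]
  exact mul_le_mul_of_nonneg_left hA hx.le

theorem eventually_loglog_le_logRatio :
    ∀ᶠ x : ℝ in atTop, Real.log (Real.log x) ≤ logRatio x := by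
  filter_upwards [Real.tendsto_log_atTop.eventually (eventually_mul_log_pow_le 1 2),
    tendsto_loglog_atTop.eventually_gt_atTop 0] with x hx hpos
  rwa [logRatio, le_div_iff₀ hpos, ← sq, ← one_mul (_ ^ 2)]

theorem eventually_logRatio_mul_loglog :
    ∀ᶠ x : ℝ in atTop, logRatio x * Real.log (Real.log x) = Real.log x := by
  filter_upwards [tendsto_loglog_atTop.eventually_gt_atTop 0] with x hpos
  exact div_mul_cancel₀ _ hpos.ne'

/-- If `x ≤ N ^ 2` then `log x` and `log N` agree up to a factor two, and otherwise
`N ≤ √x` leaves room for any power of `log x`. -/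
theorem eventually_mul_logRatio_le {κ : ℝ} (hκ : 0 < κ) :
    ∀ᶠ N : ℝ in atTop, ∀ x, 2 * κ * N * logRatio N ≤ x → N ≤ x ∧ κ * N * logRatio x ≤ x := by
  filter_upwards [eventually_gt_atTop 0, tendsto_logRatio_atTop.eventually_ge_atTop (2 * κ)⁻¹,
    Real.tendsto_log_atTop.eventually_gt_atTop 0, tendsto_loglog_atTop.eventually_gt_atTop 0,
    eventually_forall_ge_atTop.2 (eventually_mul_log_pow_le (κ ^ 2) 2),
    eventually_forall_ge_atTop.2 (eventually_mul_logRatio_le_log 1)]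
    with N hN0 hLN hlN hyN hsq hratio x hx
  have hNx : N ≤ x := by
    calc N = 2 * κ * N * (2 * κ)⁻¹ := by field_simp
      _ ≤ 2 * κ * N * logRatio N := by gcongr
      _ ≤ x := hx
  refine ⟨hNx, ?_⟩
  have hlx : Real.log N ≤ Real.log x := Real.log_le_log hN0 hNx
  rcases le_total x (N ^ 2) with hxN | hxN
  · have hlog_le : Real.log x ≤ 2 * Real.log N := by
      simpa using Real.log_le_log (hN0.trans_le hNx) hxN
    calc κ * N * logRatio x ≤ κ * N * (2 * Real.log N / Real.log (Real.log N)) := by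
          unfold logRatio
          gcongr
      _ = 2 * κ * N * logRatio N := by unfold logRatio; ring
      _ ≤ x := hx
  · have hlog_le : κ * Real.log x ≤ √x :=
      Real.le_sqrt_of_sq_le (by simpa only [mul_pow] using hsq x hNx)
    have hx0 : 0 ≤ x := hN0.le.trans hNx
    calc κ * N * logRatio x ≤ κ * N * Real.log x := by
          gcongr
          simpa using hratio x hNx
      _ = N * (κ * Real.log x) := by ring
      _ ≤ √x * √x := by
          gcongr
          · exact mul_nonneg (by linarith) (hlN.le.trans hlx)
          · exact Real.le_sqrt_of_sq_le hxN
      _ = x := Real.mul_self_sqrt hx0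

end Asymptotics

section Numerics

variable {x N R l : ℝ}

theorem exp_two_sub_one_le_seven : Real.exp 2 - 1 ≤ 7 := by
  have h := Real.exp_one_lt_d9
  rw [show (2 : ℝ) = 1 + 1 by norm_num, Real.exp_add]
  nlinarith [Real.exp_pos 1]

theorem exp_union_tail_le (hx : 0 < x) (hNR0 : 0 ≤ N * R) (hNR : 1000 * (N * R) ≤ x)
    (hl : 10 * l ≤ x) :
    Real.exp ((Real.exp 2 - 1) * (N * (x * (20 * R / x))) - 2 * (x / 4)) ≤
      Real.exp (-(3 * l)) := by
  rw [mul_div_cancel₀ _ hx.ne', show N * (20 * R) = 20 * (N * R) by ring]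
  have := mul_le_mul_of_nonneg_right exp_two_sub_one_le_seven
    (mul_nonneg (by norm_num : (0 : ℝ) ≤ 20) hNR0)
  gcongr
  linarith

theorem exp_card_tail_le (hx : 0 < x) (hl : 0 ≤ l) :
    Real.exp ((Real.exp 2 - 1) * (x * (16 * l / x)) - 2 * (100 * l)) ≤ Real.exp (-(4 * l)) := by
  rw [mul_div_cancel₀ _ hx.ne']
  have := mul_le_mul_of_nonneg_right exp_two_sub_one_le_seven
    (mul_nonneg (by norm_num : (0 : ℝ) ≤ 16) hl)
  gcongr
  linarith

theorem exp_inter_tail_le (hx : x = Real.exp l) (hl : 1 ≤ l) (hlx : 1600 ^ 2 * l ^ 4 ≤ x) :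
    Real.exp ((Real.exp (l / 2) - 1) * (100 * l * (16 * l / x)) - l / 2 * 12) ≤
      Real.exp (-(5 * l)) := by
  have hsq : x = Real.exp (l / 2) * Real.exp (l / 2) := by
    rw [hx, ← Real.exp_add, add_halves]
  have hle : 1600 * l ^ 2 ≤ Real.exp (l / 2) := by
    refine le_of_pow_le_pow_left₀ two_ne_zero (Real.exp_pos _).le ?_
    calc (1600 * l ^ 2) ^ 2 = 1600 ^ 2 * l ^ 4 := by ring
      _ ≤ Real.exp (l / 2) ^ 2 := by rwa [sq (Real.exp _), ← hsq]
  have : (Real.exp (l / 2) - 1) * (100 * l * (16 * l / x)) ≤ 1 := by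
    calc (Real.exp (l / 2) - 1) * (100 * l * (16 * l / x))
        ≤ Real.exp (l / 2) * (100 * l * (16 * l / x)) := by
          have : 0 ≤ 100 * l * (16 * l / x) := by rw [hx]; positivity
          gcongr
          linarith
      _ = 1600 * l ^ 2 / Real.exp (l / 2) := by
          rw [hsq]
          field_simp
          ring
      _ ≤ 1 := (div_le_one (Real.exp_pos _)).2 hle
  gcongr
  linarith

theorem exp_large_tail_le (hx : 0 < x) (hRl : R ≤ l) :
    Real.exp (2 * R - (x - x / 4) * (16 * l / x) / 2) ≤ Real.exp (-(4 * l)) := by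
  rw [show (x - x / 4) * (16 * l / x) / 2 = 6 * l by field_simp; ring]
  gcongr
  linarith

theorem poor_neighbor_tail_le (hx : 20 ≤ x) (hNx : N ≤ x) (hl : 1600 ≤ l)
    (hR : 0 ≤ R) (hlR : l ^ 3 ≤ Real.exp R) :
    N * (100 * l * (16 * l / x * Real.exp (3 * R - (x - x / 4 - 1) * (20 * R / x) / 2))) ≤
      Real.exp (-(3 * R)) := by
  have hx0 : 0 < x := by linarith
  have hexponent : 3 * R - (x - x / 4 - 1) * (20 * R / x) / 2 ≤ -(4 * R) := by
    rw [show (x - x / 4 - 1) * (20 * R / x) / 2 = 15 / 2 * R - 10 / x * R by field_simp; ring]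
    have : 10 / x * R ≤ 1 / 2 * R :=
      mul_le_mul_of_nonneg_right ((div_le_iff₀ hx0).2 (by linarith)) hR
    linarith
  calc N * (100 * l * (16 * l / x * Real.exp (3 * R - (x - x / 4 - 1) * (20 * R / x) / 2)))
      ≤ x * (100 * l * (16 * l / x * Real.exp (-(4 * R)))) := by gcongr
    _ = 1600 * l ^ 2 * Real.exp (-(4 * R)) := by field_simp; ring
    _ ≤ Real.exp R * Real.exp (-(4 * R)) := by gcongr; nlinarith
    _ = Real.exp (-(3 * R)) := by rw [← Real.exp_add]; congr 1; ring

theorem poor_neighbor_pow_tail_le {R : ℕ} (hx : x = Real.exp l) (hx20 : 20 ≤ x)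
    (hN : 0 ≤ N) (hNx : N ≤ x) (hl : 1600 ≤ l) (hR : 22 ≤ R) (hlR : l ^ 3 ≤ Real.exp R)
    (hlR2 : 30 * l ≤ R ^ 2) :
    N * (N * (100 * l * (16 * l / x *
      Real.exp (3 * R - (x - x / 4 - 1) * (20 * R / x) / 2)))) ^ (R / 11) ≤
        Real.exp (-(3 * l)) := by
  have hp : (R : ℝ) / 22 ≤ (R / 11 : ℕ) := by
    have : (R : ℝ) ≤ (22 * (R / 11) : ℕ) := by exact_mod_cast (by omega)
    push_cast at this
    linarith
  calc _ ≤ Real.exp l * Real.exp (-(3 * R)) ^ (R / 11) := by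
        have := poor_neighbor_tail_le hx20 hNx hl R.cast_nonneg hlR
        have : 0 < x := by linarith
        have : 0 < l := by linarith
        gcongr
        exact hNx.trans hx.le
    _ = Real.exp (l - 3 * (R * (R / 11 : ℕ))) := by
        rw [← Real.exp_nat_mul, ← Real.exp_add]
        congr 1
        ring
    _ ≤ Real.exp (-(3 * l)) := by
        have : (R : ℝ) * (R / 22) ≤ R * (R / 11 : ℕ) := by gcongr
        gcongr
        linarith

theorem exp_level_tail_le {q β L y : ℝ} (hl : 0 < l) (hL : 0 < L)
    (hy : y = Real.log l) (hLy : L * y = l) (hβy : (β * y) ^ 2 ≤ l) (hq0 : 0 ≤ q)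
    (hq : q ≤ β * (1 / (10 * L))) :
    Real.exp ((Real.exp (y / 2) - 1) * (100 * l * q) - y / 2 * (40 * L)) ≤
      Real.exp (-(4 * l)) := by
  have hsq : l = Real.exp (y / 2) * Real.exp (y / 2) := by
    rw [← Real.exp_add, add_halves, hy, Real.exp_log hl]
  have hβy' : β * y ≤ Real.exp (y / 2) :=
    le_of_pow_le_pow_left₀ two_ne_zero (Real.exp_pos _).le (by rwa [sq (Real.exp _), ← hsq])
  have : (Real.exp (y / 2) - 1) * (100 * l * q) ≤ 10 * l := by
    calc (Real.exp (y / 2) - 1) * (100 * l * q)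
        ≤ Real.exp (y / 2) * (100 * l * (β * (1 / (10 * L)))) := by
          have : 0 ≤ 100 * l * q := by positivity
          gcongr
          linarith
      _ = 10 * (Real.exp (y / 2) * (β * y)) := by
          rw [← hLy]
          field_simp
          ring
      _ ≤ 10 * (Real.exp (y / 2) * Real.exp (y / 2)) := by gcongr
      _ = 10 * l := by rw [← hsq]
  gcongr
  linarith [show y / 2 * (40 * L) = 20 * l by rw [← hLy]; ring]

theorem five_mul_exp_add_two_mul_exp_le (hx : x = Real.exp l) (hl : 0 ≤ l) :
    5 * Real.exp (-(3 * l)) + 2 * Real.exp (-(4 * l)) ≤ 7 / x ^ 3 := by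
  have hle : Real.exp (-(4 * l)) ≤ Real.exp (-(3 * l)) := by
    gcongr
    norm_num
  have hpow : Real.exp (-(3 * l)) = 1 / x ^ 3 := by
    rw [hx, ← Real.exp_nat_mul, Real.exp_neg, one_div]
    norm_cast
  linarith [show 7 / x ^ 3 = 7 * (1 / x ^ 3) by ring]

end Numerics

section GoodEvent

theorem ofReal_one_sub_le_of_forall {Ω : Type*} [MeasurableSpace Ω] {μ : Measure Ω}
    [IsProbabilityMeasure μ] {p q : Ω → Prop} {c : ℝ} (hc : μ.real {ω | ¬p ω} ≤ c)
    (hpq : ∀ ω, p ω → q ω) : ENNReal.ofReal (1 - c) ≤ μ {ω | q ω} := by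
  have hunion : μ.real Set.univ ≤ μ.real {ω | q ω} + μ.real {ω | ¬p ω} :=
    (measureReal_mono fun ω _ => or_iff_not_imp_right.2 fun h => hpq ω (not_not.1 h)).trans
      (measureReal_union_le _ _)
  rw [probReal_univ] at hunion
  rw [← ofReal_measureReal]
  exact ENNReal.ofReal_le_ofReal (by linarith)

variable {n m R : ℕ} {D : Measure ℝ} [IsProbabilityMeasure D] {θ₁ θ₂ θ l : ℝ}

instance isProbabilityMeasure_utilMeasure : IsProbabilityMeasure (utilMeasure n m D) := by
  unfold utilMeasure
  infer_instance

theorem utilMeasure_real_not_isSpread_le (hm : (m : ℝ) = Real.exp l) (hl : 1600 ≤ l)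
    (hlm : 1600 ^ 2 * l ^ 4 ≤ m) (hnm : n ≤ m) (hnR : 1000 * (n * R : ℝ) ≤ m) (hR : 22 ≤ R)
    (hRl : R ≤ l) (hlR : l ^ 3 ≤ Real.exp R) (hlR2 : 30 * l ≤ R ^ 2)
    (hθ₁ : D.real (Set.Ici θ₁) = 20 * R / m) (hθ₂ : D.real (Set.Ici θ₂) = 16 * l / m) :
    (utilMeasure n m D).real {u | ¬IsSpread (fun k => hits (Set.Ici θ₁) (u k))
      (fun k => hits (Set.Ici θ₂) (u k)) R (R / 11) 11} ≤ 5 * Real.exp (-(3 * l)) := by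
  have hl4 : l ≤ l ^ 4 := le_self_pow₀ (by linarith) (by norm_num)
  have hm0 : (0 : ℝ) < m := by linarith
  have hnm' : (n : ℝ) ≤ m := mod_cast hnm
  have habsorb {a b c : ℝ} (hbc : b ≤ Real.exp (-c)) (hca : a + l ≤ c) :
      n * b ≤ Real.exp (-a) := by
    calc n * b ≤ Real.exp l * Real.exp (-c) := by
          refine (mul_le_mul_of_nonneg_left hbc n.cast_nonneg).trans ?_
          gcongr
          exact hnm'.trans hm.le
      _ ≤ Real.exp (-a) := by
          rw [← Real.exp_add]
          gcongr
          linarith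
  have hspread := pi_measureReal_not_isSpread_hits_le (ι := Fin n) (γ := Fin m) (D := D)
    (measurableSet_Ici (a := θ₁)) (measurableSet_Ici (a := θ₂)) R (R / 11) 11 (M := m / 4)
    (b := 100 * l) (t₁ := 2) (t₂ := 2) (t₃ := l / 2) (by linarith) zero_le_two zero_le_two
    (by linarith)
  simp only [Fintype.card_fin, hθ₁, hθ₂] at hspread
  norm_num only [Nat.cast_ofNat] at hspread
  have hunion := exp_union_tail_le hm0 (by positivity) hnR (by linarith : 10 * l ≤ m)
  have hcard := habsorb (a := 3 * l) (c := 4 * l) (exp_card_tail_le hm0 (by linarith)) (by linarith)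
  have hinter := habsorb (a := 3 * l) (c := 4 * l)
    (habsorb (a := 4 * l) (c := 5 * l) (exp_inter_tail_le hm (by linarith) hlm) (by linarith))
    (by linarith)
  have hlarge := habsorb (a := 3 * l) (c := 4 * l) (exp_large_tail_le hm0 hRl) (by linarith)
  have hpoor := poor_neighbor_pow_tail_le hm (by linarith) n.cast_nonneg hnm' hl hR hlR hlR2
  rw [utilMeasure]
  linarith

theorem utilMeasure_real_le_card_hits_inter_hits_le {α β L : ℝ} (hm : (m : ℝ) = Real.exp l)
    (hl : 1 ≤ l) (hL : 0 < L) (hLl : L * Real.log l = l) (hlog : (β * Real.log l) ^ 2 ≤ l)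
    (hβ : 0 ≤ β) (hD : PDFBounded α β D) (hθ : D.real (Set.Ici θ) = 16 * l / m)
    {i j : Fin n} (hij : i ≠ j) :
    (utilMeasure n m D).real {u | 40 * L ≤
      #(hits (Set.Ici (1 - 1 / (10 * L))) (u i) ∩ hits (Set.Ici θ) (u j))} ≤
        2 * Real.exp (-(4 * l)) := by
  have hl0 : 0 < l := by linarith
  have hcard : (utilMeasure n m D).real {u | 100 * l ≤ #(hits (Set.Ici θ) (u j))} ≤
      Real.exp (-(4 * l)) := by
    have htail := measureReal_le_card_hits_inter (D := D) (measurableSet_Ici (a := θ))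
      (univ : Finset (Fin m)) zero_le_two (100 * l)
    simp only [inter_univ, card_univ, Fintype.card_fin, hθ] at htail
    have hmeas := measurable_hits (γ := Fin m) (measurableSet_Ici (a := θ))
      (MeasurableSet.of_discrete (s := {s | 100 * l ≤ #s}))
    refine Eq.trans_le ?_ (htail.trans (exp_card_tail_le (by rw [hm]; positivity) hl0.le))
    exact (measurePreserving_eval (fun _ : Fin n => Measure.pi fun _ : Fin m => D)
      j).measureReal_preimage hmeas.nullMeasurableSet
  have hlevel := pi_measureReal_le_card_inter_le (ι := Fin n) (ν := Measure.pi fun _ => D)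
    (measurable_hits (γ := Fin m) (measurableSet_Ici (a := 1 - 1 / (10 * L))))
    (measurable_hits (measurableSet_Ici (a := θ))) hij (b := 100 * l) (r := 40 * L)
    (Real.exp_pos (-(4 * l))).le fun Z hZ => ?_
  · rw [two_mul]
    refine (measureReal_mono fun u hu => ?_).trans
      ((measureReal_union_le _ _).trans (add_le_add hcard hlevel))
    exact (le_total (100 * l) #(hits (Set.Ici θ) (u j))).imp id fun h => ⟨h, hu⟩
  · have hy : 0 ≤ Real.log l / 2 := div_nonneg (Real.log_nonneg hl) zero_le_two
    have hexp := Real.one_le_exp hy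
    refine (measureReal_le_card_hits_inter measurableSet_Ici Z hy _).trans (le_trans (by gcongr)
      (exp_level_tail_le hl0 hL rfl hLl hlog measureReal_nonneg ?_))
    have := hD.measureReal_Ici_le hβ (a := 1 - 1 / (10 * L)) (by simp [hL.le])
    rwa [sub_sub_cancel] at this

/-- The event on which both probabilistic parts of the theorem hold: the utilities are separated at
level `θ` for up to `R` picks per agent, and at most `40 * L` items have value at least
`1 - 1 / (10 * L)` for agent `i` and at least `θ` for agent `j`. The theorem uses it with
`L = logRatio m`. -/
def IsFavorable (θ : ℝ) (R : ℕ) (L : ℝ) (i j : Fin n) (u : Fin n → Fin m → ℝ) : Prop :=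
  Separated θ R u ∧
    #(hits (Set.Ici (1 - 1 / (10 * L))) (u i) ∩ hits (Set.Ici θ) (u j)) ≤ 40 * L

theorem PDFBounded.exists_utilMeasure_real_not_isFavorable_le {α β : ℝ} (hD : PDFBounded α β D)
    (hα : 0 ≤ α) (hβ : 0 ≤ β) (hl : 1600 ≤ Real.log m) (hlm : 1600 ^ 2 * Real.log m ^ 4 ≤ m)
    (hLl : logRatio m * Real.log (Real.log m) = Real.log m)
    (hyL : Real.log (Real.log m) ≤ logRatio m) (hlog : (β * Real.log (Real.log m)) ^ 2 ≤ Real.log m)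
    (hαm : 16 * Real.log m / m < α * (1 / (10 * logRatio m) / 2))
    (hnm : n ≤ m) (hnR : 1000 * (n * R : ℝ) ≤ m) (hLR : 101 * logRatio m ≤ R)
    (hRl : 2 * R ≤ Real.log m) :
    ∃ θ, 1 - 1 / (10 * logRatio m) / 2 ≤ θ ∧ ∀ i j : Fin n, i ≠ j →
      (utilMeasure n m D).real {u | ¬IsFavorable θ R (logRatio m) i j u} ≤ 7 / m ^ 3 := by
  set L := logRatio m
  set l := Real.log m
  set y := Real.log l
  have hl4 : l ≤ l ^ 4 := le_self_pow₀ (by linarith) (by norm_num)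
  have hm0 : (0 : ℝ) < m := by linarith
  have hm : (m : ℝ) = Real.exp l := (Real.exp_log hm0).symm
  have hy1 : 1 ≤ y := (Real.le_log_iff_exp_le (by linarith)).2
    (Real.exp_one_lt_d9.le.trans (by linarith))
  have hR22 : 22 ≤ R := by
    have : (22 : ℝ) ≤ R := by linarith
    exact_mod_cast this
  have hlR : l ^ 3 ≤ Real.exp R := by
    rw [← Real.exp_log (show 0 < l ^ 3 by positivity), Real.log_pow]
    gcongr
    push_cast
    linarith
  have hlR2 : 30 * l ≤ R ^ 2 := by nlinarith
  obtain ⟨θ₁, θ₂, hθ₁, hθ₂, hle, hθ⟩ := hD.exists_thresholds hα (q₁ := 20 * R / m)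
    (q₂ := 16 * l / m) (ε := 1 / (10 * L) / 2) (by positivity)
    (div_lt_div_of_pos_right (by linarith) hm0) ((div_lt_one hm0).2 (by linarith))
    (by rw [div_div, div_le_one] <;> linarith) hαm
  refine ⟨θ₂, hθ, fun i j hij => ?_⟩
  have hspread := utilMeasure_real_not_isSpread_le hm hl hlm hnm hnR hR22 (by linarith) hlR hlR2
    hθ₁ hθ₂
  have hcard := utilMeasure_real_le_card_hits_inter_hits_le hm (by linarith) (by linarith) hLl hlog
    hβ hD hθ₂ hij
  refine (measureReal_mono fun u hu => ?_).trans ((measureReal_union_le _ _).trans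
    ((add_le_add hspread hcard).trans (five_mul_exp_add_two_mul_exp_le hm (by linarith))))
  by_contra! h
  simp only [Set.mem_union, Set.mem_ofPred_eq, not_or, not_not, not_le] at h
  exact hu ⟨h.1.separated hle (Nat.div_mul_le_self R 11), h.2.le⟩

end GoodEvent

section Parameters

theorem eventually_exists_utilMeasure_real_not_isFavorable_le {α β : ℝ} (hα : 0 < α) (hβ : 0 ≤ β) :
    ∀ᶠ m : ℕ in atTop, ∀ n R : ℕ, n ≤ m → 1000 * (n * R : ℝ) ≤ m → 101 * logRatio m ≤ R →
      2 * R ≤ Real.log m → ∀ D : Measure ℝ, IsProbabilityMeasure D → PDFBounded α β D →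
      ∃ θ, 1 - 1 / (10 * logRatio m) / 2 ≤ θ ∧ ∀ i j : Fin n, i ≠ j →
        (utilMeasure n m D).real {u | ¬IsFavorable θ R (logRatio m) i j u} ≤ 7 / m ^ 3 := by
  have hcast := tendsto_natCast_atTop_atTop (R := ℝ)
  filter_upwards [hcast.eventually (Real.tendsto_log_atTop.eventually_ge_atTop 1600),
    hcast.eventually (eventually_mul_log_pow_le (1600 ^ 2) 4),
    hcast.eventually (eventually_mul_log_pow_le (321 / α) 2),
    hcast.eventually eventually_logRatio_mul_loglog,
    hcast.eventually eventually_loglog_le_logRatio,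
    hcast.eventually (tendsto_logRatio_atTop.eventually_gt_atTop 0),
    hcast.eventually (eventually_mul_logRatio_le_log 1),
    hcast.eventually (Real.tendsto_log_atTop.eventually (eventually_mul_log_pow_le (β ^ 2) 2))]
    with m hl hlm hαm hLl hyL hL hLlog hlog n R hnm hnR hLR hRl D _ hD
  have hm : (0 : ℝ) < m := by
    refine lt_of_lt_of_le ?_ hlm
    positivity
  refine hD.exists_utilMeasure_real_not_isFavorable_le hα.le hβ hl hlm hLl hyL
    (by rwa [mul_pow]) ?_ hnm hnR hLR hRl
  rw [div_mul_eq_mul_div, div_le_iff₀ hα] at hαm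
  rw [div_lt_iff₀ hm, div_div, mul_one_div, div_mul_eq_mul_div, lt_div_iff₀ (by positivity)]
  nlinarith

/-- `R` will bound the number of picks of any agent before agent `i` has made `T` picks. -/
theorem eventually_exists_pick_bound_and_isFavorable {α β C : ℝ} (hα : 0 < α) (hβ : 0 < β)
    (hC : 1 ≤ C) :
    ∀ᶠ n : ℕ in atTop, ∀ m : ℕ, 2 * (500000 * (β / α) * C) * n * logRatio n ≤ m →
      1 + 100 * C ≤ logRatio m ∧ ∃ R : ℕ, 101 * (β / α) * C * logRatio m ≤ R ∧ n * R < m ∧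
      ∀ D : Measure ℝ, IsProbabilityMeasure D → PDFBounded α β D →
      ∃ θ, 1 - 1 / (10 * logRatio m) / 2 ≤ θ ∧ ∀ i j : Fin n, i ≠ j →
        (utilMeasure n m D).real {u | ¬IsFavorable θ R (logRatio m) i j u} ≤ 7 / m ^ 3 := by
  have hκ : 0 < β / α := div_pos hβ hα
  have hcast := tendsto_natCast_atTop_atTop (R := ℝ)
  filter_upwards [hcast.eventually (eventually_mul_logRatio_le
      (show 0 < 500000 * (β / α) * C by positivity)),
    eventually_forall_ge_atTop.2 (hcast.eventually
      (tendsto_logRatio_atTop.eventually_ge_atTop (1 + 100 * C))),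
    eventually_forall_ge_atTop.2 (hcast.eventually
      (tendsto_logRatio_atTop.eventually_ge_atTop (β / α)⁻¹)),
    eventually_forall_ge_atTop.2 (hcast.eventually
      (eventually_mul_logRatio_le_log (204 * (β / α) * C))),
    eventually_forall_ge_atTop.2 (eventually_exists_utilMeasure_real_not_isFavorable_le hα hβ.le),
    eventually_gt_atTop 0] with n hn hL hκL hlog hsep hn0 m hm
  obtain ⟨hnm', hκm⟩ := hn m hm
  have hnm : n ≤ m := mod_cast hnm'
  have hL1 := (inv_le_iff_one_le_mul₀' hκ).1 (hκL m hnm)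
  set L := logRatio m
  have hCL : β / α * L ≤ β / α * L * C := le_mul_of_one_le_right (by linarith) hC
  set R := ⌈101 * (β / α) * C * L⌉₊
  have hR := Nat.ceil_lt_add_one (show 0 ≤ 101 * (β / α) * C * L by linarith)
  have hnR : 1000 * (n * R : ℝ) ≤ m := by
    calc 1000 * (n * R : ℝ) ≤ 1000 * (n * (500 * (β / α * L * C))) := by gcongr; linarith
      _ = 500000 * (β / α) * C * n * L := by ring
      _ ≤ m := hκm
  refine ⟨hL m hnm, R, Nat.le_ceil _, ?_, fun D _ hD => hsep m hnm n R hnm hnR ?_ ?_ D ‹_› hD⟩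
  · have : 1000 * (n * R) ≤ m := mod_cast hnR
    omega
  · have hαβ : 1 ≤ β / α := (one_le_div hα).2 (hD.le hβ.le)
    have hL0 : 0 ≤ L := by linarith [hL m hnm]
    have : L ≤ β / α * L := le_mul_of_one_le_left hL0 hαβ
    exact le_trans (by linarith) (Nat.le_ceil (101 * (β / α) * C * L))
  · linarith [hlog m hnm]

section PickNumber

variable {ι : Type*} {w : ι → ℝ} {κ C L : ℝ}

theorem ceil_pickNumber_mul_le (hw : ∀ i, 0 < w i) (hwC : ∀ i j, w i ≤ C * w j) (hC : 1 ≤ C)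
    (hκ : 1 ≤ κ) (hL : 1 + 100 * C ≤ L) (i j k : ι) :
    1 + (100 * ⌈κ * (w i / w j) * L⌉₊ : ℕ) * (w k / w i) ≤ 101 * κ * C * L := by
  have hL0 : 0 ≤ L := by linarith
  have hratio (a b : ι) : w a / w b ≤ C := (div_le_iff₀ (hw b)).2 (hwC a b)
  have hceil := Nat.ceil_lt_add_one (a := κ * (w i / w j) * L)
    (by have := hw i; have := hw j; positivity)
  have hκC : 1 ≤ κ * C := one_le_mul_of_one_le_of_one_le hκ hC
  push_cast
  calc 1 + 100 * (⌈κ * (w i / w j) * L⌉₊ : ℝ) * (w k / w i)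
      ≤ 1 + 100 * (κ * (w i / w j) * L + 1) * (w k / w i) := by
        have := div_pos (hw k) (hw i)
        gcongr
    _ = 1 + 100 * (κ * L * (w k / w j)) + 100 * (w k / w i) := by
        have := (hw i).ne'
        field_simp
        ring
    _ ≤ 1 + 100 * (κ * L * C) + 100 * C := by
        gcongr
        exacts [hratio k j, hratio k i]
    _ ≤ 101 * κ * C * L := by
        have : L ≤ κ * C * L := le_mul_of_one_le_left hL0 hκC
        linarith

theorem le_ceil_pickNumber_mul (hw : ∀ i, 0 < w i) (hwC : ∀ i j, w i ≤ C * w j) (hC : 1 ≤ C)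
    (hκ : 1 ≤ κ) (hL : 1 + 100 * C ≤ L) (i j : ι) :
    40 * L + 4 / (1 / (10 * L)) + 1 ≤
      ((100 * ⌈κ * (w i / w j) * L⌉₊ : ℕ) - 1) * (w j / w i) := by
  have hL0 : 0 ≤ L := by linarith
  have hji : 0 < w j / w i := div_pos (hw j) (hw i)
  have hC' : w j / w i ≤ C := (div_le_iff₀ (hw i)).2 (hwC j i)
  have hle : κ * L ≤ ⌈κ * (w i / w j) * L⌉₊ * (w j / w i) := by
    calc κ * L = κ * (w i / w j) * L * (w j / w i) := by
          have := (hw i).ne'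
          have := (hw j).ne'
          field_simp
      _ ≤ _ := by gcongr; exact Nat.le_ceil _
  have : L ≤ κ * L := le_mul_of_one_le_left hL0 hκ
  push_cast
  rw [div_div_eq_mul_div]
  linarith

end PickNumber

end Parameters

/-- Let `α, β > 0` and `C ≥ 1`.  There is a constant `K` (depending only on `α, β, C`)
such that for every `(α,β)`-PDF-bounded `D`, all sufficiently large `n`, every
`m ≥ 10^6·(β/α)·C·n·log n/log log n`, every weight vector with ratio at most `C`, and
any distinct agents `i, j`, the positive integer
`T = 100·⌈(β/α)·(w_i/w_j)·log m/log log m⌉` satisfies, for the weighted picking sequence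
algorithm run on utilities drawn independently from `D`: (a) `t_i(m) ≥ T ≥ 1` (in every
run); (b) with probability at least `1 - K/m³`, agent `i`'s `T`-th pick has value at
least `1/2`; (c) with probability at least `1 - K/m³`,
`∑_{k ∈ [T]} ∑_{ℓ ∈ [τ_k]} (1 - u_i(g^j_{k,ℓ})/u_i(g^i_k)) ≥ 2`. -/
theorem wps_key_lemma (α β C : ℝ) (hα : 0 < α) (hβ : 0 < β) (hC : 1 ≤ C) :
    ∃ K : ℝ, 0 < K ∧ ∃ N : ℕ,
      ∀ D : Measure ℝ, IsProbabilityMeasure D → PDFBounded α β D →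
      ∀ n : ℕ, N ≤ n → ∀ m : ℕ,
      10 ^ 6 * (β / α) * C * n * Real.log n / Real.log (Real.log n) ≤ (m : ℝ) →
      ∀ w : Fin n → ℝ, (∀ i, 0 < w i) → (∀ i j, w i ≤ C * w j) →
      ∀ i j : Fin n, i ≠ j →
      ∀ T : ℕ,
        T = 100 * ⌈(β / α) * (w i / w j) * Real.log m / Real.log (Real.log m)⌉₊ →
        (1 ≤ T ∧
          (∀ u : Fin n → Fin m → ℝ, ∀ picker : Fin m → Fin n, ∀ item : Fin m → Fin m,
            IsWPSRun w u picker item → T ≤ pickCount picker i m)) ∧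
        ENNReal.ofReal (1 - K / m ^ 3) ≤
          utilMeasure n m D
            {u | ∀ picker : Fin m → Fin n, ∀ item : Fin m → Fin m,
              IsWPSRun w u picker item → 1 / 2 ≤ pickVal u picker item i T} ∧
        ENNReal.ofReal (1 - K / m ^ 3) ≤
          utilMeasure n m D
            {u | ∀ picker : Fin m → Fin n, ∀ item : Fin m → Fin m,
              IsWPSRun w u picker item → 2 ≤ intervalSum u picker item i j T} := by
  obtain ⟨N, hN⟩ := eventually_atTop.1 (eventually_exists_pick_bound_and_isFavorable hα hβ hC)
  refine ⟨7, by norm_num, N, fun D _ hD n hn m hm w hw hwC i j hij T hT => ?_⟩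
  obtain ⟨hL, R, hLR, hnR, hfav⟩ := hN n hn m (le_of_eq_of_le (by rw [logRatio]; ring) hm)
  obtain ⟨θ, hθ, hprob⟩ := hfav D ‹_› hD
  rw [mul_div_assoc, ← logRatio] at hT
  set L := logRatio m
  have hκ : 1 ≤ β / α := (one_le_div hα).2 (hD.le hβ.le)
  have hTR (k : Fin n) : 1 + T * (w k / w i) ≤ R :=
    hT ▸ (ceil_pickNumber_mul_le hw hwC hC hκ hL i j k).trans hLR
  have hcount : 40 * L + 4 / (1 / (10 * L)) + 1 ≤ (T - 1) * (w j / w i) :=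
    hT ▸ le_ceil_pickNumber_mul hw hwC hC hκ hL i j
  have hL0 : 0 < L := by linarith
  have hL1 : 1 / (10 * L) ≤ 1 := (div_le_one (by positivity)).2 (by linarith)
  have hT1 : 1 ≤ T := by
    have := Nat.ceil_pos.2 (mul_pos (mul_pos (div_pos hβ hα) (div_pos (hw i) (hw j))) hL0)
    omega
  refine ⟨⟨hT1, fun u picker item h => h.le_pickCount hw hTR hnR⟩,
    ofReal_one_sub_le_of_forall (hprob i j hij) fun u hu picker item h => ?_,
    ofReal_one_sub_le_of_forall (hprob i j hij) fun u hu picker item h => ?_⟩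
  · exact le_trans (by linarith) (h.le_pickVal hw hTR hnR hu.1 hT1 le_rfl)
  · exact h.two_le_intervalSum hw hTR hnR hu.1 (by positivity) hL1 hθ hu.2 hcount
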